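/- arXiv:math/9905083 — 2 statements merged into one kernel-verified Lean document; each statement's English description precedes it below -/
import Mathlib

section
/- Let f and g be polynomials with complex coefficients, with coefficient sequences (f_a) and (g_a) (set to 0 for indices outside the degree range). Then for every positive integer l, E_{U∈U(l)} det(f(U)) · det(g(U*)) = det_{0≤j,k<l} ( Σ_{a≥0} f_a · g_{a+j−k} ), where U* is the conjugate transpose of U, f(U) and g(U*) denote evaluation of the polynomials at the matrices U and U*, and the right-hand side is the determinant of the l×l Toeplitz matrix with (j,k) entry Σ_{a≥0} f_a g_{a+j−k} (interpreting g at a negative index as 0). -/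
open MeasureTheory Matrix

noncomputable section

instance (l : ℕ) : MeasurableSpace (Matrix.unitaryGroup (Fin l) ℂ) := borel _
instance (l : ℕ) : BorelSpace (Matrix.unitaryGroup (Fin l) ℂ) := ⟨rfl⟩

/-- The coefficient of a polynomial at an integer index (zero at negative indices). -/
def coeffZ (g : Polynomial ℂ) (m : ℤ) : ℂ :=
  if 0 ≤ m then g.coeff m.toNat else 0

section MixedDiscriminant

open Equiv

variable {n R : Type*} [Fintype n] [DecidableEq n] [CommRing R]

/-- The (unnormalised) mixed discriminant of a family of matrices: the full polarisation of the
determinant. -/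
def mixedDet : MultilinearMap R (fun _ : n => Matrix n n R) R :=
  ∑ σ : Perm n, ∑ τ : Perm n, (((Perm.sign σ : ℤ) : R) * ((Perm.sign τ : ℤ) : R)) •
    (MultilinearMap.mkPiAlgebra R n R).compLinearMap
      fun k => Matrix.entryLinearMap R R (σ k) (τ k)

theorem mixedDet_apply (A : n → Matrix n n R) :
    mixedDet A = ∑ σ : Perm n, ∑ τ : Perm n,
      (((Perm.sign σ : ℤ) : R) * ((Perm.sign τ : ℤ) : R)) * ∏ k, A k (σ k) (τ k) := by
  simp [mixedDet]

theorem mixedDet_const (A : Matrix n n R) :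
    mixedDet (fun _ => A) = ((Fintype.card n).factorial : R) * A.det := by
  rw [mixedDet_apply, Finset.sum_comm]
  have h (τ : Perm n) : ∑ σ : Perm n,
      (((Perm.sign σ : ℤ) : R) * ((Perm.sign τ : ℤ) : R)) * ∏ k, A (σ k) (τ k) = A.det := by
    have h1 := Matrix.det_permute' τ A
    rw [Matrix.det_apply'] at h1
    simp only [Matrix.submatrix_apply, id] at h1
    have h2 : ((Perm.sign τ : ℤ) : R) * ((Perm.sign τ : ℤ) : R) = 1 := by
      rw [← Int.cast_mul, ← Units.val_mul, Int.units_mul_self]; simp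
    calc _ = ((Perm.sign τ : ℤ) : R) * ∑ σ : Perm n,
        ((Perm.sign σ : ℤ) : R) * ∏ k, A (σ k) (τ k) := by
          rw [Finset.mul_sum]
          exact Finset.sum_congr rfl fun _ _ => by ring
      _ = A.det := by rw [h1, ← mul_assoc, h2, one_mul]
  simp [h, Fintype.card_perm]

theorem mixedDet_comp_perm (A : n → Matrix n n R) (π : Perm n) :
    mixedDet (fun k => A (π k)) = mixedDet A := by
  rw [mixedDet_apply, mixedDet_apply, ← Equiv.sum_comp (Equiv.mulRight π)]
  refine Finset.sum_congr rfl fun σ _ => ?_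
  rw [← Equiv.sum_comp (Equiv.mulRight π)]
  refine Finset.sum_congr rfl fun τ _ => ?_
  have h2 : ((Perm.sign π : ℤ) : R) * ((Perm.sign π : ℤ) : R) = 1 := by
    rw [← Int.cast_mul, ← Units.val_mul, Int.units_mul_self]; simp
  have h3 : ∏ k, A (π k) ((σ * π) k) ((τ * π) k) = ∏ k, A k (σ k) (τ k) :=
    Equiv.prod_comp π fun k => A k (σ k) (τ k)
  simp only [Equiv.coe_mulRight, h3, Perm.sign_mul, Units.val_mul, Int.cast_mul]
  linear_combination ((Perm.sign σ : ℤ) : R) * ((Perm.sign τ : ℤ) : R) *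
    (∏ k, A k (σ k) (τ k)) * h2

theorem prod_update_apply (A : n → Matrix n n R) (i : n) (B : Matrix n n R) (σ τ : n → n) :
    ∏ k, Function.update A i B k (σ k) (τ k) =
      B (σ i) (τ i) * ∏ k ∈ Finset.univ.erase i, A k (σ k) (τ k) := by
  rw [← Finset.mul_prod_erase _ _ (Finset.mem_univ i), Function.update_self]
  congr 1
  refine Finset.prod_congr rfl fun k hk => ?_
  rw [Function.update_of_ne (Finset.ne_of_mem_erase hk)]

theorem prod_update_update_apply (A : n → Matrix n n R) {i j : n} (hij : i ≠ j)
    (B C : Matrix n n R) (σ τ : n → n) :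
    ∏ k, Function.update (Function.update A i B) j C k (σ k) (τ k) =
      B (σ i) (τ i) * C (σ j) (τ j) *
        ∏ k ∈ (Finset.univ.erase i).erase j, A k (σ k) (τ k) := by
  rw [prod_update_apply, Finset.erase_right_comm,
    ← Finset.mul_prod_erase _ _ (Finset.mem_erase.2 ⟨hij, Finset.mem_univ i⟩),
    Function.update_self]
  have : ∏ k ∈ (Finset.univ.erase j).erase i, Function.update A i B k (σ k) (τ k) =
      ∏ k ∈ (Finset.univ.erase j).erase i, A k (σ k) (τ k) :=
    Finset.prod_congr rfl fun k hk => by rw [Function.update_of_ne (Finset.ne_of_mem_erase hk)]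
  rw [this]
  ring

theorem prod_erase_erase_mul_swap (A : n → Matrix n n R) (i j : n) (σ τ : Perm n) :
    ∏ k ∈ (Finset.univ.erase i).erase j, A k ((σ * swap i j) k) (τ k) =
      ∏ k ∈ (Finset.univ.erase i).erase j, A k (σ k) (τ k) := by
  refine Finset.prod_congr rfl fun k hk => ?_
  simp only [Finset.mem_erase] at hk
  rw [Perm.mul_apply, swap_apply_of_ne_of_ne hk.2.1 hk.1]

/-- Left multiplication by a fixed matrix acts on mixed discriminants as a derivation with
character the trace. -/
theorem sum_mixedDet_update_mul (A : n → Matrix n n R) (M : Matrix n n R) :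
    ∑ k, mixedDet (Function.update A k (M * A k)) = M.trace * mixedDet A := by
  have key (τ : Perm n) : ∑ p : n × n × Perm n,
      (if p.2.1 = p.1 then 0 else
        ((Perm.sign p.2.2 : ℤ) : R) * (M (p.2.2 p.1) (p.2.2 p.2.1) *
          A p.1 (p.2.2 p.2.1) (τ p.1) *
            ∏ m ∈ Finset.univ.erase p.1, A m (p.2.2 m) (τ m))) = 0 := by
    refine Finset.sum_involution (fun p _ => (p.2.1, p.1, p.2.2 * swap p.1 p.2.1)) ?_ ?_ ?_ ?_
    · rintro ⟨k, j, σ⟩ -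
      by_cases h : j = k
      · simp [h]
      · have hk : k ∈ Finset.univ.erase j := by simp [Ne.symm h]
        have hj : j ∈ Finset.univ.erase k := by simp [h]
        have e := prod_erase_erase_mul_swap A k j σ τ
        simp only [h, Ne.symm h, if_false]
        rw [← Finset.mul_prod_erase _ _ hk, ← Finset.mul_prod_erase _ _ hj,
          Finset.erase_right_comm (a := j), e]
        simp [Perm.sign_mul, Perm.sign_swap (Ne.symm h)]
        ring
    · rintro ⟨k, j, σ⟩ - h0 h
      simp only [Prod.mk.injEq] at h
      exact h0 (if_pos h.1)
    · simp
    · rintro ⟨k, j, σ⟩ -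
      simp [swap_comm j k, mul_assoc]
  have e1 (k : n) (σ τ : Perm n) : ∏ m, Function.update A k (M * A k) m (σ m) (τ m) =
      M (σ k) (σ k) * ∏ m, A m (σ m) (τ m) + ∑ j, (if j = k then 0 else
        (M (σ k) (σ j) * A k (σ j) (τ k) *
            ∏ m ∈ Finset.univ.erase k, A m (σ m) (τ m))) := by
    rw [prod_update_apply, Matrix.mul_apply, ← Equiv.sum_comp σ, Finset.sum_mul,
      ← Finset.mul_prod_erase _ _ (Finset.mem_univ k),
      ← Finset.add_sum_erase _ _ (Finset.mem_univ k),
      ← Finset.add_sum_erase Finset.univ (fun j => ite (j = k) _ _) (Finset.mem_univ k)]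
    simp only [if_true, zero_add]
    congr 1
    · ring
    · exact Finset.sum_congr rfl fun j hj => by rw [if_neg (Finset.ne_of_mem_erase hj)]
  simp only [mixedDet_apply, e1, mul_add, Finset.sum_add_distrib]
  have e2 : ∑ k, ∑ σ : Perm n, ∑ τ : Perm n, (((Perm.sign σ : ℤ) : R) * ((Perm.sign τ : ℤ) : R)) *
      (M (σ k) (σ k) * ∏ m, A m (σ m) (τ m)) = M.trace * ∑ σ : Perm n, ∑ τ : Perm n,
      (((Perm.sign σ : ℤ) : R) * ((Perm.sign τ : ℤ) : R)) * ∏ k, A k (σ k) (τ k) := by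
    rw [Finset.sum_comm, Finset.mul_sum]
    refine Finset.sum_congr rfl fun σ _ => ?_
    rw [Finset.sum_comm, Finset.mul_sum]
    refine Finset.sum_congr rfl fun τ _ => ?_
    have ht : M.trace = ∑ k, M (σ k) (σ k) := (Equiv.sum_comp σ fun k => M k k).symm
    rw [ht, Finset.sum_mul]
    exact Finset.sum_congr rfl fun k _ => by ring
  rw [e2, add_eq_left]
  have e3 : ∑ τ : Perm n, ((Perm.sign τ : ℤ) : R) * (∑ p : n × n × Perm n,
      (if p.2.1 = p.1 then 0 else
        ((Perm.sign p.2.2 : ℤ) : R) * (M (p.2.2 p.1) (p.2.2 p.2.1) *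
          A p.1 (p.2.2 p.2.1) (τ p.1) *
            ∏ m ∈ Finset.univ.erase p.1, A m (p.2.2 m) (τ m)))) = 0 := by
    simp [key]
  refine Eq.trans ?_ e3
  simp only [Fintype.sum_prod_type, Finset.mul_sum]
  conv_rhs => rw [Finset.sum_comm]
  refine Finset.sum_congr rfl fun k _ => ?_
  rw [Finset.sum_comm]
  refine Finset.sum_congr rfl fun τ _ => ?_
  rw [Finset.sum_comm]
  refine Finset.sum_congr rfl fun j _ => Finset.sum_congr rfl fun σ _ => ?_
  split_ifs
  · simp
  · ring

theorem sum_single_mul_mul_single_mul (P Q : Matrix n n R) :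
    ∑ a, ∑ b, Matrix.single b a (1 : R) * (Q * Matrix.single a b (1 : R) * P) = Q.trace • P := by
  ext p q
  simp [Matrix.sum_apply, Matrix.mul_apply, Matrix.single_apply, Matrix.trace, Finset.sum_mul,
    ite_and]

/-- Contracting two slots against the exchange operator swaps them up to a sign. -/
theorem sum_mixedDet_update_single (A : n → Matrix n n R) {i j : n} (hij : i ≠ j)
    (P Q S : Matrix n n R) :
    ∑ a, ∑ b, mixedDet (Function.update (Function.update A i (Matrix.single b a (1 : R) * P)) j
      (Q * Matrix.single a b (1 : R) * S)) =
      - mixedDet (Function.update (Function.update A i (Q * P)) j S) := by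
  have e (p q p' q' : n) : ∑ a, ∑ b, (Matrix.single b a (1 : R) * P : Matrix n n R) p q *
      (Q * Matrix.single a b (1 : R) * S : Matrix n n R) p' q' = (Q * P) p' q * S p q' := by
    simp [Matrix.mul_apply, Matrix.single_apply, ite_and, Finset.sum_mul]
    exact Finset.sum_congr rfl fun _ _ => by ring
  simp only [mixedDet_apply, prod_update_update_apply A hij]
  rw [← Equiv.sum_comp (Equiv.mulRight (swap i j)) (fun σ : Perm n => ∑ τ : Perm n,
    (((Perm.sign σ : ℤ) : R) * ((Perm.sign τ : ℤ) : R)) * ((Q * P) (σ i) (τ i) * S (σ j) (τ j) *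
        ∏ k ∈ (Finset.univ.erase i).erase j, A k (σ k) (τ k))), ← Finset.sum_neg_distrib]
  simp only [Equiv.coe_mulRight, prod_erase_erase_mul_swap]
  calc _ = ∑ σ : Perm n, ∑ τ : Perm n, ∑ a, ∑ b, (((Perm.sign σ : ℤ) : R) *
        ((Perm.sign τ : ℤ) : R)) * ((Matrix.single b a (1 : R) * P : Matrix n n R) (σ i) (τ i) *
      (Q * Matrix.single a b (1 : R) * S : Matrix n n R) (σ j) (τ j) *
        ∏ k ∈ (Finset.univ.erase i).erase j, A k (σ k) (τ k)) := by
        rw [Finset.sum_congr rfl fun a _ => Finset.sum_comm, Finset.sum_comm]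
        refine Finset.sum_congr rfl fun σ _ => ?_
        rw [Finset.sum_congr rfl fun a _ => Finset.sum_comm, Finset.sum_comm]
    _ = _ := by
        refine Finset.sum_congr rfl fun σ _ => ?_
        rw [← Finset.sum_neg_distrib]
        refine Finset.sum_congr rfl fun τ _ => ?_
        simp only [← Finset.mul_sum, ← Finset.sum_mul, e]
        simp [Perm.sign_mul, Perm.sign_swap hij]

end MixedDiscriminant

section Recursion

variable {ι : Type*} [DecidableEq ι]

/-- Replace the `i`-th exponent by `c` and adjust the `k`-th one so that the total is preserved. -/
def transferExponent (m : ι → ℕ) (i k : ι) (c : ℕ) : ι → ℕ :=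
  Function.update (Function.update m i c) k (m i + m k - c)

theorem sum_sq_transferExponent_lt [Fintype ι] (m : ι → ℕ) {i k : ι} (hik : i ≠ k) {c : ℕ}
    (h : m i < c ∧ c < m k ∨ m k < c ∧ c < m i) :
    ∑ j, transferExponent m i k c j ^ 2 < ∑ j, m j ^ 2 := by
  have e (f : ι → ℕ) : ∑ j, f j ^ 2 =
      f i ^ 2 + (f k ^ 2 + ∑ j ∈ (Finset.univ.erase i).erase k, f j ^ 2) := by
    rw [← Finset.add_sum_erase _ _ (Finset.mem_univ i),
      ← Finset.add_sum_erase _ _ (Finset.mem_erase.2 ⟨hik.symm, Finset.mem_univ k⟩)]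
  rw [e, e]
  have e1 : ∑ j ∈ (Finset.univ.erase i).erase k, transferExponent m i k c j ^ 2 =
      ∑ j ∈ (Finset.univ.erase i).erase k, m j ^ 2 := by
    refine Finset.sum_congr rfl fun j hj => ?_
    simp only [Finset.mem_erase] at hj
    simp [transferExponent, Function.update_of_ne hj.1, Function.update_of_ne hj.2.1]
  rw [e1, ← add_assoc, ← add_assoc, add_lt_add_iff_right]
  simp only [transferExponent, Function.update_self, Function.update_of_ne hik]
  have hc : c ≤ m i + m k := by omega
  zify [hc]
  rcases h with ⟨h1, h2⟩ | ⟨h1, h2⟩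
  · have h1' : (0 : ℤ) < c - m i := by omega
    have h2' : (0 : ℤ) < m k - c := by omega
    nlinarith [mul_pos h1' h2']
  · have h1' : (0 : ℤ) < c - m k := by omega
    have h2' : (0 : ℤ) < m i - c := by omega
    nlinarith [mul_pos h1' h2']

theorem transferExponent_self_left (m : ι → ℕ) {i k : ι} :
    transferExponent m i k (m i) = m := by
  simp [transferExponent]

theorem transferExponent_self_right (m : ι → ℕ) {i k : ι} :
    transferExponent m i k (m k) = fun j => m (Equiv.swap i k j) := by
  ext j
  rcases eq_or_ne j k with rfl | hk
  · simp [transferExponent]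
  · rcases eq_or_ne j i with rfl | hi
    · simp [transferExponent, Function.update_of_ne hk]
    · simp [transferExponent, Function.update_of_ne hk, Function.update_of_ne hi,
        Equiv.swap_apply_of_ne_of_ne hi hk]

/-- The loop equations, together with symmetry, determine a function of the exponents up to its
value at the constant tuple. -/
theorem eq_zero_of_loop_equation [Fintype ι] (N : ℕ) (Z : (ι → ℕ) → ℂ)
    (hsymm : ∀ (m : ι → ℕ) (π : Equiv.Perm ι), Z (fun j => m (π j)) = Z m)
    (hloop : ∀ (m : ι → ℕ) (i : ι), ((m i : ℂ) - N) * Z m + ∑ k ∈ Finset.univ.erase i,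
      (∑ c ∈ Finset.Ioc 0 (m i), Z (transferExponent m i k c) -
        ∑ c ∈ Finset.Ioc 0 (m k), Z (transferExponent m i k c)) = 0)
    (hconst : Z (fun _ => N) = 0) (m : ι → ℕ) : Z m = 0 := by
  induction hs : ∑ j, m j ^ 2 using Nat.strong_induction_on generalizing m with
  | _ s ih =>
  subst hs
  have key (i k : ι) (hik : i ≠ k) : ∑ c ∈ Finset.Ioc 0 (m i), Z (transferExponent m i k c) -
        ∑ c ∈ Finset.Ioc 0 (m k), Z (transferExponent m i k c) =
      ((Int.sign ((m i : ℤ) - m k) : ℤ) : ℂ) * Z m := by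
    rcases lt_trichotomy (m i) (m k) with h | h | h
    · rw [← Finset.sum_Ioc_consecutive _ (Nat.zero_le _) h.le, sub_add_cancel_left,
        Int.sign_eq_neg_one_of_neg (by omega),
        Finset.sum_eq_single_of_mem (m k) (by simp [h]), transferExponent_self_right, hsymm]
      · simp
      · intro c hc hne
        rw [Finset.mem_Ioc] at hc
        exact ih _ (sum_sq_transferExponent_lt m hik (Or.inl ⟨hc.1, by omega⟩)) _ rfl
    · simp [h]
    · rw [← Finset.sum_Ioc_consecutive _ (Nat.zero_le _) h.le, add_sub_cancel_left,
        Int.sign_eq_one_of_pos (by omega),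
        Finset.sum_eq_single_of_mem (m i) (by simp [h]), transferExponent_self_left]
      · simp
      · intro c hc hne
        rw [Finset.mem_Ioc] at hc
        exact ih _ (sum_sq_transferExponent_lt m hik (Or.inr ⟨hc.1, by omega⟩)) _ rfl
  have key2 (i : ι) : (((m i : ℤ) - N + ∑ k ∈ Finset.univ.erase i,
      Int.sign ((m i : ℤ) - m k) : ℤ) : ℂ) * Z m = 0 := by
    rw [← hloop m i]
    push_cast
    rw [add_mul, Finset.sum_mul]
    congr 1
    exact Finset.sum_congr rfl fun k hk => (key i k (Finset.ne_of_mem_erase hk).symm).symm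
  by_cases hup : ∃ j, N < m j
  · obtain ⟨j, hj⟩ := hup
    obtain ⟨i, -, hi⟩ := Finset.exists_max_image Finset.univ m ⟨j, Finset.mem_univ j⟩
    refine (mul_eq_zero.1 (key2 i)).resolve_left (Int.cast_ne_zero.2 (ne_of_gt ?_))
    have h1 : 0 ≤ ∑ k ∈ Finset.univ.erase i, Int.sign ((m i : ℤ) - m k) :=
      Finset.sum_nonneg fun k _ =>
        Int.sign_nonneg_iff.2 (by have := hi k (Finset.mem_univ k); omega)
    have := hi j (Finset.mem_univ j)
    omega
  by_cases hlow : ∃ j, m j < N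
  · obtain ⟨j, hj⟩ := hlow
    obtain ⟨i, -, hi⟩ := Finset.exists_min_image Finset.univ m ⟨j, Finset.mem_univ j⟩
    refine (mul_eq_zero.1 (key2 i)).resolve_left (Int.cast_ne_zero.2 (ne_of_lt ?_))
    have h1 : ∑ k ∈ Finset.univ.erase i, Int.sign ((m i : ℤ) - m k) ≤ 0 :=
      Finset.sum_nonpos fun k _ =>
        Int.sign_nonpos_iff.2 (by have := hi k (Finset.mem_univ k); omega)
    have := hi j (Finset.mem_univ j)
    omega
  push Not at hup hlow
  rw [show m = fun _ => N from funext fun j => le_antisymm (hup j) (hlow j)]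
  exact hconst

end Recursion
section Toeplitz

open Equiv

variable {R : Type*} [CommRing R] {l : ℕ}

theorem sum_int_sign_sub (a : Fin l) : ∑ b : Fin l, Int.sign ((a : ℤ) - b) = 2 * a - (l - 1) := by
  have h (r : ℕ) : ∀ n, r + 1 ≤ n →
      ∑ b ∈ Finset.range n, Int.sign ((r : ℤ) - (b : ℕ)) = 2 * r - (n - 1) := by
    intro n hn
    induction n, hn using Nat.le_induction with
    | base =>
      rw [Finset.sum_range_succ, Finset.sum_congr rfl fun b hb =>
        Int.sign_eq_one_of_pos (by have := Finset.mem_range.1 hb; omega)]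
      simp
      ring
    | succ n hn ih =>
      rw [Finset.sum_range_succ, ih, Int.sign_eq_neg_one_of_neg (by omega)]
      push_cast
      ring
  rw [Fin.sum_univ_eq_sum_range fun b => Int.sign ((a : ℤ) - (b : ℕ))]
  exact h a l a.2

/-- The terms with `σ i ≠ α k` cancel in pairs. -/
theorem sum_sign_off_target_eq_zero (α : Fin l → ℤ) (i : Fin l) :
    ∑ p : Fin l × Perm (Fin l) with p.1 ≠ i ∧ (∀ j, j ≠ i → j ≠ p.1 → (p.2 j : ℤ) = α j) ∧
        (p.2 i : ℤ) + p.2 p.1 = α i + α p.1 ∧ (p.2 i : ℤ) ≠ α p.1 ∧ (p.2 i : ℤ) ≠ α i,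
      ((Perm.sign p.2 : ℤ) : R) * ((Int.sign ((p.2 i : ℤ) - α i) : ℤ) : R) = 0 := by
  classical
  have huniq {σ : Perm (Fin l)} {a : ℤ} {q q' : Fin l} (h : (σ q : ℤ) = a)
      (h' : (σ q' : ℤ) = a) : q = q' :=
    σ.injective (Fin.ext (by omega))
  let F : Fin l × Perm (Fin l) → Fin l × Perm (Fin l) := fun p =>
    if h : ∃ q, (p.2 q : ℤ) = α p.1 then (h.choose, p.2 * swap p.1 h.choose)
    else (p.1, p.2 * swap i p.1)
  have hF1 (k : Fin l) (σ : Perm (Fin l)) (q : Fin l) (hq : (σ q : ℤ) = α k) :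
      F (k, σ) = (q, σ * swap k q) := by
    have h : ∃ q, (σ q : ℤ) = α k := ⟨q, hq⟩
    simp only [F, dif_pos h, huniq h.choose_spec hq]
  have hF2 (k : Fin l) (σ : Perm (Fin l)) (hq : ¬ ∃ q, (σ q : ℤ) = α k) :
      F (k, σ) = (k, σ * swap i k) := by
    simp only [F, dif_neg hq]
  refine Finset.sum_involution (fun p _ => F p) ?_ ?_ ?_ ?_
  · rintro ⟨k, σ⟩ hp
    simp only [Finset.mem_filter, Finset.mem_univ, true_and] at hp
    obtain ⟨hki, hC, hS, h1, h2⟩ := hp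
    by_cases hq : ∃ q, (σ q : ℤ) = α k
    · obtain ⟨q, hq⟩ := hq
      have hqi : q ≠ i := by rintro rfl; exact h1 hq
      have hqk : q ≠ k := by rintro rfl; omega
      rw [hF1 k σ q hq]
      simp [Perm.sign_mul, Perm.sign_swap hqk.symm, swap_apply_of_ne_of_ne hki.symm hqi.symm]
    · rw [hF2 k σ hq]
      have hs : Int.sign ((σ k : ℤ) - α i) = Int.sign ((σ i : ℤ) - α i) := by
        by_cases h0 : α k < 0
        · rw [Int.sign_eq_neg_one_of_neg (by omega), Int.sign_eq_neg_one_of_neg (by omega)]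
        · have hl : (l : ℤ) ≤ α k := by
            by_contra hlt
            refine hq ⟨σ.symm ⟨(α k).toNat, by omega⟩, ?_⟩
            simp
            omega
          have := (σ i).2
          have := (σ k).2
          rw [Int.sign_eq_one_of_pos (by omega), Int.sign_eq_one_of_pos (by omega)]
      simp [Perm.sign_mul, Perm.sign_swap hki.symm, hs]
  · rintro ⟨k, σ⟩ hp -
    simp only [Finset.mem_filter, Finset.mem_univ, true_and] at hp
    obtain ⟨hki, hC, hS, h1, h2⟩ := hp
    by_cases hq : ∃ q, (σ q : ℤ) = α k
    · obtain ⟨q, hq⟩ := hq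
      have hqk : q ≠ k := by rintro rfl; omega
      rw [hF1 k σ q hq]
      simp [hqk]
    · rw [hF2 k σ hq]
      simp [swap_eq_one_iff, hki.symm]
  · rintro ⟨k, σ⟩ hp
    simp only [Finset.mem_filter, Finset.mem_univ, true_and] at hp ⊢
    obtain ⟨hki, hC, hS, h1, h2⟩ := hp
    by_cases hq : ∃ q, (σ q : ℤ) = α k
    · obtain ⟨q, hq⟩ := hq
      have hqi : q ≠ i := by rintro rfl; exact h1 hq
      have hqk : q ≠ k := by rintro rfl; omega
      have hαq : α q = α k := by rw [← hC q hqi hqk, hq]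
      rw [hF1 k σ q hq]
      simp only [Perm.mul_apply, swap_apply_of_ne_of_ne hki.symm hqi.symm, swap_apply_right]
      refine ⟨hqi, fun j hji hjq => ?_, by omega, by omega, h2⟩
      rcases eq_or_ne j k with rfl | hjk
      · simp [hq]
      · rw [swap_apply_of_ne_of_ne hjk hjq, hC j hji hjk]
    · rw [hF2 k σ hq]
      simp only [Perm.mul_apply, swap_apply_left, swap_apply_right]
      refine ⟨hki, fun j hji hjk => ?_, by omega, fun h => hq ⟨k, h⟩, by omega⟩
      rw [swap_apply_of_ne_of_ne hji hjk, hC j hji hjk]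
  · rintro ⟨k, σ⟩ hp
    simp only [Finset.mem_filter, Finset.mem_univ, true_and] at hp
    obtain ⟨hki, hC, hS, h1, h2⟩ := hp
    by_cases hq : ∃ q, (σ q : ℤ) = α k
    · obtain ⟨q, hq⟩ := hq
      have hqi : q ≠ i := by rintro rfl; exact h1 hq
      have hqk : q ≠ k := by rintro rfl; omega
      have hαq : α q = α k := by rw [← hC q hqi hqk, hq]
      simp only [hF1 k σ q hq]
      rw [hF1 q _ k (by simp [hq, hαq]), swap_comm q k, mul_assoc, Equiv.swap_mul_self, mul_one]
    · simp only [hF2 k σ hq]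
      rw [hF2 k _ fun ⟨q, h⟩ => hq ⟨swap i k q, h⟩, mul_assoc, Equiv.swap_mul_self, mul_one]

/-- A combinatorial form of
`∑ k ≠ i, (z i + z k) / (z i - z k) * Δ = 2 * z i * ∂ i Δ - (l - 1) * Δ` for the Vandermonde
product `Δ`, read off at the monomial with exponents `α`. -/
theorem sum_sign_transfer (α : Fin l → ℤ) (i : Fin l) :
    ∑ k ∈ Finset.univ.erase i, ∑ σ : Perm (Fin l), ((Perm.sign σ : ℤ) : R) *
      (if (∀ j, j ≠ i → j ≠ k → (σ j : ℤ) = α j) ∧ (σ i : ℤ) + σ k = α i + α k then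
        ((Int.sign ((σ i : ℤ) - α i) : ℤ) : R) else 0) =
    ∑ σ : Perm (Fin l), ((Perm.sign σ : ℤ) : R) *
      (if ∀ j, (σ j : ℤ) = α j then (2 * (σ i : ℕ) - (l - 1) : R) else 0) := by
  classical
  have main (k : Fin l) (hki : k ≠ i) : ∑ σ : Perm (Fin l), ((Perm.sign σ : ℤ) : R) *
      (if ((∀ j, j ≠ i → j ≠ k → (σ j : ℤ) = α j) ∧ (σ i : ℤ) + σ k = α i + α k) ∧
          (σ i : ℤ) = α k then
        ((Int.sign ((σ i : ℤ) - α i) : ℤ) : R) else 0) =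
      ∑ σ : Perm (Fin l), ((Perm.sign σ : ℤ) : R) *
      (if ∀ j, (σ j : ℤ) = α j then ((Int.sign ((σ i : ℤ) - σ k) : ℤ) : R) else 0) := by
    rw [← Equiv.sum_comp (Equiv.mulRight (swap i k))]
    refine Finset.sum_congr rfl fun σ _ => ?_
    simp only [Equiv.coe_mulRight, Perm.mul_apply, swap_apply_left, swap_apply_right]
    have hiff : (((∀ j, j ≠ i → j ≠ k → (σ (swap i k j) : ℤ) = α j) ∧
        (σ k : ℤ) + σ i = α i + α k) ∧ (σ k : ℤ) = α k) ↔ ∀ j, (σ j : ℤ) = α j := by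
      constructor
      · rintro ⟨⟨hC, hS⟩, hk⟩ j
        rcases eq_or_ne j k with rfl | hjk
        · exact hk
        rcases eq_or_ne j i with rfl | hji
        · omega
        rw [← hC j hji hjk, swap_apply_of_ne_of_ne hji hjk]
      · intro h
        refine ⟨⟨fun j hji hjk => ?_, by rw [h, h, add_comm]⟩, h k⟩
        rw [swap_apply_of_ne_of_ne hji hjk, h]
    simp only [hiff, Perm.sign_mul, Perm.sign_swap hki.symm]
    split_ifs with h
    · rw [← h i, show (σ k : ℤ) - σ i = -((σ i : ℤ) - σ k) by ring, Int.sign_neg]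
      simp
    · simp
  have split (k : Fin l) (σ : Perm (Fin l)) : ((Perm.sign σ : ℤ) : R) *
      (if (∀ j, j ≠ i → j ≠ k → (σ j : ℤ) = α j) ∧ (σ i : ℤ) + σ k = α i + α k then
        ((Int.sign ((σ i : ℤ) - α i) : ℤ) : R) else 0) =
      ((Perm.sign σ : ℤ) : R) *
      (if ((∀ j, j ≠ i → j ≠ k → (σ j : ℤ) = α j) ∧ (σ i : ℤ) + σ k = α i + α k) ∧
          (σ i : ℤ) = α k then
        ((Int.sign ((σ i : ℤ) - α i) : ℤ) : R) else 0) +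
      (if (∀ j, j ≠ i → j ≠ k → (σ j : ℤ) = α j) ∧
        (σ i : ℤ) + σ k = α i + α k ∧ (σ i : ℤ) ≠ α k ∧ (σ i : ℤ) ≠ α i then
          ((Perm.sign σ : ℤ) : R) * ((Int.sign ((σ i : ℤ) - α i) : ℤ) : R) else 0) := by
    by_cases h1 : (∀ j, j ≠ i → j ≠ k → (σ j : ℤ) = α j) ∧ (σ i : ℤ) + σ k = α i + α k
    · by_cases h2 : (σ i : ℤ) = α k
      · simp [h2]
      · by_cases h3 : (σ i : ℤ) = α i
        · simp [h3]
        · rw [if_pos h1, if_neg (fun h => h2 h.2), if_pos ⟨h1.1, h1.2, h2, h3⟩]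
          simp
    · rw [if_neg h1, if_neg (fun h => h1 h.1), if_neg (fun h => h1 ⟨h.1, h.2.1⟩)]
      simp
  simp only [split, Finset.sum_add_distrib]
  have hoff := sum_sign_off_target_eq_zero (R := R) α i
  rw [Finset.sum_filter, Fintype.sum_prod_type,
    ← Finset.add_sum_erase _ _ (Finset.mem_univ i)] at hoff
  have hoff' : ∑ k ∈ Finset.univ.erase i, ∑ σ : Perm (Fin l),
      (if (∀ j, j ≠ i → j ≠ k → (σ j : ℤ) = α j) ∧
        (σ i : ℤ) + σ k = α i + α k ∧ (σ i : ℤ) ≠ α k ∧ (σ i : ℤ) ≠ α i then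
          ((Perm.sign σ : ℤ) : R) * ((Int.sign ((σ i : ℤ) - α i) : ℤ) : R) else 0) = 0 := by
    refine Eq.trans ?_ hoff
    simp only [ne_eq, not_true_eq_false, false_and, if_false, Finset.sum_const_zero, zero_add]
    refine Finset.sum_congr rfl fun k hk => ?_
    simp only [Finset.ne_of_mem_erase hk, not_false_eq_true, true_and]
  rw [hoff', add_zero, Finset.sum_congr rfl fun k hk => main k (Finset.ne_of_mem_erase hk),
    Finset.sum_comm]
  refine Finset.sum_congr rfl fun σ _ => ?_
  rw [← Finset.mul_sum]
  congr 1
  split_ifs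
  · have h := sum_int_sign_sub (σ i)
    rw [← Equiv.sum_comp σ, ← Finset.add_sum_erase _ _ (Finset.mem_univ i)] at h
    simp only [sub_self, Int.sign_zero, zero_add] at h
    rw [← Int.cast_sum, h]
    push_cast
    ring
  · simp

end Toeplitz

section ToeplitzLoop

open Equiv

theorem comp_transferExponent {ι β : Type*} [DecidableEq ι] (f : ℕ → β) (m : ι → ℕ) (i k : ι)
    (c : ℕ) : (fun j => f (transferExponent m i k c j)) =
      Function.update (Function.update (fun j => f (m j)) i (f c)) k (f (m i + m k - c)) := by
  ext j
  simp only [transferExponent, Function.update_apply]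
  split_ifs <;> rfl

variable {R : Type*} [CommRing R] {l : ℕ}

/-- The truncation to size `l` of the `n`-th power of the bilateral shift. -/
def shiftMatrix (R : Type*) [CommRing R] (l : ℕ) (n : ℤ) : Matrix (Fin l) (Fin l) R :=
  Matrix.of fun a b => if (b : ℤ) - a = n then 1 else 0

theorem shiftMatrix_zero : shiftMatrix R l 0 = 1 := by
  ext a b
  have : (b : ℤ) - a = 0 ↔ a = b := by rw [Fin.ext_iff]; omega
  simp only [shiftMatrix, Matrix.of_apply, Matrix.one_apply, this]

theorem sum_sum_sign_mul_sign_mul_swap {n : Type*} [Fintype n] [DecidableEq n] (i k : n)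
    (F : Perm n → Perm n → R) :
    ∑ τ : Perm n, ∑ σ : Perm n, ((Perm.sign τ : ℤ) : R) * (((Perm.sign σ : ℤ) : R) *
      F (σ * swap i k) (τ * swap i k)) =
    ∑ τ : Perm n, ∑ σ : Perm n, ((Perm.sign τ : ℤ) : R) * (((Perm.sign σ : ℤ) : R) * F σ τ) := by
  have h2 : ((Perm.sign (swap i k) : ℤ) : R) * ((Perm.sign (swap i k) : ℤ) : R) = 1 := by
    rw [← Int.cast_mul, ← Units.val_mul, Int.units_mul_self]; simp
  conv_rhs => rw [← Equiv.sum_comp (Equiv.mulRight (swap i k))]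
  refine Finset.sum_congr rfl fun τ _ => ?_
  conv_rhs => rw [← Equiv.sum_comp (Equiv.mulRight (swap i k))]
  refine Finset.sum_congr rfl fun σ _ => ?_
  simp only [Equiv.coe_mulRight, Perm.sign_mul, Units.val_mul, Int.cast_mul]
  linear_combination (- ((Perm.sign τ : ℤ) : R) * ((Perm.sign σ : ℤ) : R) *
      F (σ * swap i k) (τ * swap i k)) * h2

theorem mixedDet_shiftMatrix (N : ℕ) (m : Fin l → ℕ) :
    mixedDet (fun k => shiftMatrix R l ((m k : ℤ) - N)) =
      ∑ τ : Perm (Fin l), ∑ σ : Perm (Fin l), ((Perm.sign τ : ℤ) : R) *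
        (((Perm.sign σ : ℤ) : R) *
          if ∀ j, (σ j : ℤ) = (τ j : ℤ) + N - m j then 1 else 0) := by
  rw [mixedDet_apply, Finset.sum_comm]
  refine Finset.sum_congr rfl fun τ _ => Finset.sum_congr rfl fun σ _ => ?_
  simp only [shiftMatrix, Matrix.of_apply, Finset.prod_ite_zero, Finset.prod_const_one]
  rw [← mul_assoc, mul_comm ((Perm.sign τ : ℤ) : R)]
  congr 1
  refine if_congr ⟨fun h j => ?_, fun h j _ => ?_⟩ rfl rfl
  · have := h j (Finset.mem_univ j); omega
  · have := h j; omega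

theorem sum_mixedDet_shiftMatrix_transferExponent (N : ℕ) (m : Fin l → ℕ) {i k : Fin l}
    (hik : i ≠ k) {M : ℕ} (hM : M ≤ m i + m k) :
    ∑ c ∈ Finset.Ioc 0 M,
      mixedDet (fun j => shiftMatrix R l ((transferExponent m i k c j : ℤ) - N)) =
      ∑ τ : Perm (Fin l), ∑ σ : Perm (Fin l), ((Perm.sign τ : ℤ) : R) *
        (((Perm.sign σ : ℤ) : R) *
          if ((∀ j, j ≠ i → j ≠ k → (σ j : ℤ) = (τ j : ℤ) + N - m j) ∧
            (σ i : ℤ) + σ k = ((τ i : ℤ) + N - m i) + ((τ k : ℤ) + N - m k)) ∧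
            0 < (τ i : ℤ) - σ i + N ∧ (τ i : ℤ) - σ i + N ≤ M then 1 else 0) := by
  have h (c : ℕ) := comp_transferExponent (fun e : ℕ => shiftMatrix R l ((e : ℤ) - N)) m i k c
  simp only [h, mixedDet_apply, prod_update_update_apply _ hik]
  rw [Finset.sum_comm, Finset.sum_congr rfl fun σ _ => Finset.sum_comm, Finset.sum_comm]
  refine Finset.sum_congr rfl fun τ _ => Finset.sum_congr rfl fun σ _ => ?_
  rw [← Finset.mul_sum, ← Finset.sum_mul]
  simp only [shiftMatrix, Matrix.of_apply, Finset.prod_ite_zero, Finset.prod_const_one]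
  have h1 : (∑ c ∈ Finset.Ioc 0 M, (if (τ i : ℤ) - σ i = (c : ℤ) - N then (1 : R) else 0) *
      (if (τ k : ℤ) - σ k = ((m i + m k - c : ℕ) : ℤ) - N then (1 : R) else 0)) =
      if ((σ i : ℤ) + σ k = ((τ i : ℤ) + N - m i) + ((τ k : ℤ) + N - m k)) ∧
            0 < (τ i : ℤ) - σ i + N ∧ (τ i : ℤ) - σ i + N ≤ M then 1 else 0 := by
    split_ifs with hc
    · rw [Finset.sum_eq_single_of_mem ((τ i : ℤ) - σ i + N).toNat
        (Finset.mem_Ioc.2 ⟨by omega, by omega⟩)]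
      · rw [if_pos (by omega), if_pos (by omega), one_mul]
      · intro c _ hne
        rw [if_neg (by omega), zero_mul]
    · refine Finset.sum_eq_zero fun c hcm => ?_
      rw [Finset.mem_Ioc] at hcm
      split_ifs
      · exact absurd ⟨by omega, by omega, by omega⟩ hc
      all_goals simp
  rw [h1, ite_zero_mul_ite_zero, mul_one, mul_comm ((Perm.sign σ : ℤ) : R), mul_assoc]
  congr 2
  refine if_congr ?_ rfl rfl
  simp only [Finset.mem_erase, Finset.mem_univ, and_true, and_imp]
  constructor
  · rintro ⟨⟨hS, h2⟩, hC⟩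
    exact ⟨⟨fun j hji hjk => by have := hC j hjk hji; omega, hS⟩, h2⟩
  · rintro ⟨⟨hC, hS⟩, h2⟩
    exact ⟨⟨hS, h2⟩, fun j hjk hji => by have := hC j hji hjk; omega⟩

theorem mixedDet_shiftMatrix_transfer_sub (N : ℕ) (m : Fin l → ℕ) {i k : Fin l} (hik : i ≠ k) :
    ∑ c ∈ Finset.Ioc 0 (m i),
        mixedDet (fun j => shiftMatrix R l ((transferExponent m i k c j : ℤ) - N)) -
      ∑ c ∈ Finset.Ioc 0 (m k),
        mixedDet (fun j => shiftMatrix R l ((transferExponent m i k c j : ℤ) - N)) =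
      ∑ τ : Perm (Fin l), ((Perm.sign τ : ℤ) : R) * ∑ σ : Perm (Fin l),
        ((Perm.sign σ : ℤ) : R) *
          (if (∀ j, j ≠ i → j ≠ k → (σ j : ℤ) = (τ j : ℤ) + N - m j) ∧
            (σ i : ℤ) + σ k = ((τ i : ℤ) + N - m i) + ((τ k : ℤ) + N - m k) then
          ((Int.sign ((σ i : ℤ) - ((τ i : ℤ) + N - m i)) : ℤ) : R) else 0) := by
  let G : ℕ → Perm (Fin l) → Perm (Fin l) → R := fun M σ τ =>
    if ((∀ j, j ≠ i → j ≠ k → (σ j : ℤ) = (τ j : ℤ) + N - m j) ∧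
            (σ i : ℤ) + σ k = ((τ i : ℤ) + N - m i) + ((τ k : ℤ) + N - m k)) ∧
            (τ i : ℤ) - σ i + N ≤ M then 1 else 0
  rw [sum_mixedDet_shiftMatrix_transferExponent N m hik (by omega),
    sum_mixedDet_shiftMatrix_transferExponent N m hik (by omega)]
  have hsw := sum_sum_sign_mul_sign_mul_swap i k (G (m k))
  calc _ = ∑ τ : Perm (Fin l), ∑ σ : Perm (Fin l), ((Perm.sign τ : ℤ) : R) *
        (((Perm.sign σ : ℤ) : R) * G (m i) σ τ) -
        ∑ τ : Perm (Fin l), ∑ σ : Perm (Fin l), ((Perm.sign τ : ℤ) : R) *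
        (((Perm.sign σ : ℤ) : R) * G (m k) σ τ) := by
        simp only [← Finset.sum_sub_distrib]
        refine Finset.sum_congr rfl fun τ _ => Finset.sum_congr rfl fun σ _ => ?_
        simp only [← mul_sub]
        congr 2
        simp only [G]
        by_cases hC : (∀ j, j ≠ i → j ≠ k → (σ j : ℤ) = (τ j : ℤ) + N - m j) ∧
            (σ i : ℤ) + σ k = ((τ i : ℤ) + N - m i) + ((τ k : ℤ) + N - m k)
        · by_cases h0 : 0 < (τ i : ℤ) - σ i + N
          · simp only [hC, h0, true_and]
          · have h1 : (τ i : ℤ) - σ i + N ≤ m i := by omega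
            have h2 : (τ i : ℤ) - σ i + N ≤ m k := by omega
            simp [hC, h0, h1, h2]
        · simp only [hC, false_and]
    _ = _ := by
        rw [← hsw]
        simp only [← Finset.sum_sub_distrib, Finset.mul_sum]
        refine Finset.sum_congr rfl fun τ _ => Finset.sum_congr rfl fun σ _ => ?_
        simp only [← mul_sub]
        congr 2
        simp only [G, Perm.mul_apply, swap_apply_left, swap_apply_right]
        by_cases hC : (∀ j, j ≠ i → j ≠ k → (σ j : ℤ) = (τ j : ℤ) + N - m j) ∧
            (σ i : ℤ) + σ k = ((τ i : ℤ) + N - m i) + ((τ k : ℤ) + N - m k)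
        · have hC' : (∀ j, j ≠ i → j ≠ k →
              (σ (swap i k j) : ℤ) = (τ (swap i k j) : ℤ) + N - m j) ∧
              (σ k : ℤ) + σ i = ((τ k : ℤ) + N - m i) + ((τ i : ℤ) + N - m k) :=
            ⟨fun j hji hjk => by rw [swap_apply_of_ne_of_ne hji hjk]; exact hC.1 j hji hjk,
              by omega⟩
          rw [if_pos hC]
          rw [if_congr (and_iff_right hC') rfl rfl, if_congr (and_iff_right hC) rfl rfl]
          have hS := hC.2
          rcases lt_trichotomy ((σ i : ℤ)) ((τ i : ℤ) + N - m i) with h | h | h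
          · rw [if_neg (by omega), if_pos (by omega), Int.sign_eq_neg_one_of_neg (by omega)]
            simp
          · rw [if_pos (by omega), if_pos (by omega), h]
            simp
          · rw [if_pos (by omega), if_neg (by omega), Int.sign_eq_one_of_pos (by omega)]
            simp
        · have hC' : ¬ ((∀ j, j ≠ i → j ≠ k →
              (σ (swap i k j) : ℤ) = (τ (swap i k j) : ℤ) + N - m j) ∧
              (σ k : ℤ) + σ i = ((τ k : ℤ) + N - m i) + ((τ i : ℤ) + N - m k)) := by
            rintro ⟨h1, h2⟩
            refine hC ⟨fun j hji hjk => ?_, by omega⟩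
            have := h1 j hji hjk
            rwa [swap_apply_of_ne_of_ne hji hjk] at this
          rw [if_neg hC]
          simp only [hC, hC', false_and, if_false, sub_self]

theorem sum_sign_reversal (N : ℕ) (m : Fin l → ℕ) (i : Fin l) [IsAddTorsionFree R] :
    ∑ τ : Perm (Fin l), ∑ σ : Perm (Fin l), ((Perm.sign τ : ℤ) : R) *
      (((Perm.sign σ : ℤ) : R) * if ∀ j, (σ j : ℤ) = (τ j : ℤ) + N - m j then
        (((τ i : ℕ) : R) + (σ i : ℕ) - (l - 1)) else 0) = 0 := by
  set Q := ∑ τ : Perm (Fin l), ∑ σ : Perm (Fin l), ((Perm.sign τ : ℤ) : R) *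
      (((Perm.sign σ : ℤ) : R) * if ∀ j, (σ j : ℤ) = (τ j : ℤ) + N - m j then
        (((τ i : ℕ) : R) + (σ i : ℕ) - (l - 1)) else 0) with hQ
  have h2 : ((Perm.sign (Fin.revPerm (n := l)) : ℤ) : R) *
      ((Perm.sign (Fin.revPerm (n := l)) : ℤ) : R) = 1 := by
    rw [← Int.cast_mul, ← Units.val_mul, Int.units_mul_self]; simp
  have hneg : Q = -Q := by
    conv_lhs => rw [hQ, Finset.sum_comm, ← Equiv.sum_comp (Equiv.mulLeft Fin.revPerm)]
    rw [hQ, ← Finset.sum_neg_distrib]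
    refine Finset.sum_congr rfl fun τ _ => ?_
    rw [← Equiv.sum_comp (Equiv.mulLeft Fin.revPerm), ← Finset.sum_neg_distrib]
    refine Finset.sum_congr rfl fun σ _ => ?_
    have hr (a : Fin l) : ((Fin.rev a : Fin l) : ℤ) = l - 1 - a := by
      rw [Fin.val_rev]; have := a.2; omega
    have hr' (a : Fin l) : (((Fin.rev a : Fin l) : ℕ) : R) = l - 1 - (a : ℕ) := by
      have := congrArg (Int.cast : ℤ → R) (hr a)
      simpa using this
    simp only [Equiv.coe_mulLeft, Perm.mul_apply, Fin.revPerm_apply, hr, hr', Perm.sign_mul,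
      Units.val_mul, Int.cast_mul]
    have hiff : (∀ j, (l : ℤ) - 1 - (τ j : ℕ) = l - 1 - (σ j : ℕ) + N - m j) ↔
        ∀ j, (σ j : ℤ) = (τ j : ℤ) + N - m j :=
      forall_congr' fun j => ⟨fun h => by omega, fun h => by omega⟩
    rw [if_congr hiff rfl rfl]
    split_ifs
    · linear_combination (((Perm.sign σ : ℤ) : R) * ((Perm.sign τ : ℤ) : R) *
        ((l : R) - 1 - (σ i : ℕ) - (τ i : ℕ))) * h2
    · simp
  exact self_eq_neg.1 hneg

/-- Mixed discriminants of truncated shifts satisfy the loop equations. -/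
theorem mixedDet_shiftMatrix_loop_equation [IsAddTorsionFree R] (N : ℕ) (m : Fin l → ℕ)
    (i : Fin l) :
    ((m i : R) - N) * mixedDet (fun j => shiftMatrix R l ((m j : ℤ) - N)) +
      ∑ k ∈ Finset.univ.erase i, (∑ c ∈ Finset.Ioc 0 (m i),
        mixedDet (fun j => shiftMatrix R l ((transferExponent m i k c j : ℤ) - N)) -
      ∑ c ∈ Finset.Ioc 0 (m k),
        mixedDet (fun j => shiftMatrix R l ((transferExponent m i k c j : ℤ) - N))) = 0 := by
  rw [Finset.sum_congr rfl fun k hk =>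
    mixedDet_shiftMatrix_transfer_sub N m (Finset.ne_of_mem_erase hk).symm, Finset.sum_comm]
  simp only [← Finset.mul_sum]
  simp only [sum_sign_transfer (R := R)]
  refine Eq.trans ?_ (sum_sign_reversal (R := R) N m i)
  rw [mixedDet_shiftMatrix, Finset.mul_sum,
    ← Finset.sum_add_distrib]
  refine Finset.sum_congr rfl fun τ _ => ?_
  rw [Finset.mul_sum, Finset.mul_sum, ← Finset.sum_add_distrib]
  refine Finset.sum_congr rfl fun σ _ => ?_
  split_ifs with h
  · have h1 : ((σ i : ℕ) : R) = ((τ i : ℕ) : R) + N - m i := by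
      have := congrArg (Int.cast : ℤ → R) (h i)
      simpa using this
    linear_combination (((Perm.sign τ : ℤ) : R) * ((Perm.sign σ : ℤ) : R)) * h1
  · simp

end ToeplitzLoop

section LoopAlgebra

open Equiv

variable {R : Type*} [CommRing R] {n : Type*} [Fintype n] [DecidableEq n]

theorem mixedDet_update_update_comm (A : n → Matrix n n R) {i k : n} (hik : i ≠ k)
    (P Q : Matrix n n R) :
    mixedDet (Function.update (Function.update A i P) k Q) =
      mixedDet (Function.update (Function.update A i Q) k P) := by
  rw [← mixedDet_comp_perm _ (swap i k)]
  congr 1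
  ext1 j
  rcases eq_or_ne j k with rfl | hk
  · simp [Function.update_of_ne hik]
  · rcases eq_or_ne j i with rfl | hi
    · simp [Function.update_of_ne hik]
    · simp [swap_apply_of_ne_of_ne hi hk, Function.update_of_ne hk, Function.update_of_ne hi]

theorem sum_range_sub_eq_sum_Ioc {M : Type*} [AddCommMonoid M] (F : ℕ → M) (N : ℕ) :
    ∑ s ∈ Finset.range N, F (N - s) = ∑ c ∈ Finset.Ioc 0 N, F c := by
  refine Finset.sum_bij' (fun s _ => N - s) (fun c _ => N - c) ?_ ?_ ?_ ?_ ?_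
  all_goals intro s hs; simp only [Finset.mem_range, Finset.mem_Ioc] at hs ⊢
  all_goals omega

/-- The derivative of `V ^ m` in the direction `X * V`. -/
def powDeriv (V X : Matrix n n R) (m : ℕ) : Matrix n n R :=
  ∑ s ∈ Finset.range m, V ^ s * X * V ^ (m - s)

theorem sum_mixedDet_powDeriv_self (V : Matrix n n R) (m : n → ℕ) (i : n) :
    ∑ a, ∑ b, mixedDet (Function.update (fun j => V ^ m j) i
      (Matrix.single b a (1 : R) * powDeriv V (Matrix.single a b 1) (m i))) =
    m i * mixedDet (fun j => V ^ m j) + ∑ k ∈ Finset.univ.erase i, ∑ c ∈ Finset.Ioc 0 (m i),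
      mixedDet (fun j => V ^ transferExponent m i k c j) := by
  have h1 : ∑ a, ∑ b, mixedDet (Function.update (fun j => V ^ m j) i
      (Matrix.single b a (1 : R) * powDeriv V (Matrix.single a b 1) (m i))) =
      ∑ s ∈ Finset.range (m i),
        mixedDet (Function.update (fun j => V ^ m j) i ((V ^ s).trace • V ^ (m i - s))) := by
    simp only [← MultilinearMap.map_update_sum, powDeriv, Finset.mul_sum]
    congr 2
    rw [Finset.sum_congr rfl fun _ _ => Finset.sum_comm, Finset.sum_comm]
    exact Finset.sum_congr rfl fun s _ => sum_single_mul_mul_single_mul _ _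
  rw [h1]
  have h2 (s : ℕ) (hs : s ∈ Finset.range (m i)) :
      mixedDet (Function.update (fun j => V ^ m j) i ((V ^ s).trace • V ^ (m i - s))) =
      mixedDet (fun j => V ^ m j) + ∑ k ∈ Finset.univ.erase i,
        mixedDet (fun j => V ^ transferExponent m i k (m i - s) j) := by
    rw [Finset.mem_range] at hs
    rw [MultilinearMap.map_update_smul, smul_eq_mul, ← sum_mixedDet_update_mul,
      ← Finset.add_sum_erase _ _ (Finset.mem_univ i)]
    congr 1
    · rw [Function.update_idem, Function.update_self, ← pow_add, Nat.add_sub_cancel' hs.le]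
      simp
    · refine Finset.sum_congr rfl fun k hk => ?_
      rw [comp_transferExponent, Function.update_of_ne (Finset.ne_of_mem_erase hk), ← pow_add,
        show m i + m k - (m i - s) = s + m k by omega]
  rw [Finset.sum_congr rfl h2, Finset.sum_add_distrib, Finset.sum_const, Finset.card_range,
    nsmul_eq_mul, Finset.sum_comm]
  congr 1
  exact Finset.sum_congr rfl fun k _ => sum_range_sub_eq_sum_Ioc
    (fun c => mixedDet (fun j => V ^ transferExponent m i k c j)) (m i)

theorem sum_mixedDet_powDeriv_of_ne (V : Matrix n n R) (m : n → ℕ) {i k : n} (hik : i ≠ k) :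
    ∑ a, ∑ b, mixedDet (Function.update
      (Function.update (fun j => V ^ m j) i (Matrix.single b a (1 : R) * V ^ m i)) k
      (powDeriv V (Matrix.single a b 1) (m k))) =
    - ∑ c ∈ Finset.Ioc 0 (m k), mixedDet (fun j => V ^ transferExponent m i k c j) := by
  simp only [powDeriv, MultilinearMap.map_update_sum]
  rw [Finset.sum_congr rfl fun _ _ => Finset.sum_comm, Finset.sum_comm]
  simp only [sum_mixedDet_update_single _ hik, Finset.sum_neg_distrib]
  rw [← sum_range_sub_eq_sum_Ioc
    (fun c => mixedDet (fun j => V ^ transferExponent m i k c j))]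
  congr 1
  refine Finset.sum_congr rfl fun s hs => ?_
  rw [Finset.mem_range] at hs
  rw [comp_transferExponent, mixedDet_update_update_comm _ hik, ← pow_add,
    show m i + m k - (m k - s) = s + m i by omega]

theorem sum_mixedDet_powDeriv (N : ℕ) (V : Matrix n n R) (m : n → ℕ) (i : n) :
    ∑ a, ∑ b, ((-(N : R) * (Matrix.single a b (1 : R)).trace) *
        mixedDet (fun k => Function.update (1 : n → Matrix n n R) i (Matrix.single b a 1) k *
          V ^ m k) +
      ∑ k, mixedDet (Function.update (fun k => Function.update (1 : n → Matrix n n R) i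
        (Matrix.single b a 1) k * V ^ m k) k (Function.update (1 : n → Matrix n n R) i
        (Matrix.single b a 1) k * powDeriv V (Matrix.single a b 1) (m k)))) =
    ((m i : R) - N) * mixedDet (fun j => V ^ m j) + ∑ k ∈ Finset.univ.erase i,
      (∑ c ∈ Finset.Ioc 0 (m i), mixedDet (fun j => V ^ transferExponent m i k c j) -
        ∑ c ∈ Finset.Ioc 0 (m k), mixedDet (fun j => V ^ transferExponent m i k c j)) := by
  have hB (a b : n) : (fun k => Function.update (1 : n → Matrix n n R) i (Matrix.single b a 1) k *
      V ^ m k) = Function.update (fun k => V ^ m k) i (Matrix.single b a 1 * V ^ m i) := by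
    ext1 k
    rcases eq_or_ne k i with rfl | hk
    · simp
    · simp [Function.update_of_ne hk]
  have ht : ∑ a, ∑ b, (-(N : R) * (Matrix.single a b (1 : R)).trace) *
      mixedDet (Function.update (fun k => V ^ m k) i (Matrix.single b a 1 * V ^ m i)) =
      -(N : R) * mixedDet (fun j => V ^ m j) := by
    have h (a : n) : ∑ b, (-(N : R) * (Matrix.single a b (1 : R)).trace) *
      mixedDet (Function.update (fun k => V ^ m k) i (Matrix.single b a 1 * V ^ m i)) =
      -(N : R) * mixedDet (Function.update (fun k => V ^ m k) i
        (Matrix.single a a 1 * V ^ m i)) := by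
      rw [Finset.sum_eq_single_of_mem a (Finset.mem_univ a)]
      · simp
      · intro b _ hb
        rw [Matrix.trace_single_eq_of_ne _ _ _ hb.symm]
        simp
    simp only [h]
    rw [← Finset.mul_sum, ← MultilinearMap.map_update_sum, ← Finset.sum_mul]
    have : ∑ a : n, Matrix.single a a (1 : R) = 1 := by
      ext p q; simp [Matrix.sum_apply, Matrix.single_apply, Matrix.one_apply, ite_and]
    rw [this, one_mul]
    simp
  simp only [hB, Finset.sum_add_distrib, ht]
  have hk : ∀ k ∈ Finset.univ.erase i, ∑ a, ∑ b, mixedDet (Function.update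
      (Function.update (fun k => V ^ m k) i (Matrix.single b a (1 : R) * V ^ m i)) k
      (Function.update (1 : n → Matrix n n R) i (Matrix.single b a 1) k *
        powDeriv V (Matrix.single a b 1) (m k))) =
      - ∑ c ∈ Finset.Ioc 0 (m k), mixedDet (fun j => V ^ transferExponent m i k c j) := by
    intro k hk
    have hki := Finset.ne_of_mem_erase hk
    simp only [Function.update_of_ne hki, Pi.one_apply, one_mul]
    exact sum_mixedDet_powDeriv_of_ne V m hki.symm
  rw [Finset.sum_congr rfl fun _ _ => Finset.sum_comm, Finset.sum_comm,
    ← Finset.add_sum_erase _ _ (Finset.mem_univ i), Finset.sum_congr rfl hk]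
  simp only [Function.update_idem, Function.update_self, sum_mixedDet_powDeriv_self,
    Finset.sum_sub_distrib, Finset.sum_neg_distrib]
  ring

end LoopAlgebra

section HaarLoop

variable {l : ℕ}

instance compactSpace_unitaryGroup : CompactSpace (Matrix.unitaryGroup (Fin l) ℂ) := by
  refine isCompact_iff_compactSpace.1 (IsCompact.of_isClosed_subset (isCompact_univ_pi
    fun _ : Fin l => isCompact_univ_pi fun _ : Fin l => isCompact_closedBall (0 : ℂ) 1) ?_ ?_)
  · have : ((Matrix.unitaryGroup (Fin l) ℂ : Set (Matrix (Fin l) (Fin l) ℂ))) =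
        {U | star U * U = 1} ∩ {U | U * star U = 1} := by
      ext U; exact Unitary.mem_iff
    rw [this]
    exact (isClosed_eq (by fun_prop) continuous_const).inter
      (isClosed_eq (by fun_prop) continuous_const)
  · intro U hU i _ j _
    simpa using entry_norm_bound_of_unitary hU i j

theorem integrable_unitaryGroup (μ : Measure (Matrix.unitaryGroup (Fin l) ℂ))
    [IsFiniteMeasure μ] {F : Matrix (Fin l) (Fin l) ℂ → ℂ} (hF : Continuous F) :
    Integrable (fun U : Matrix.unitaryGroup (Fin l) ℂ => F U) μ :=
  (hF.comp continuous_subtype_val).integrable_of_hasCompactSupport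
    (HasCompactSupport.of_compactSpace _)

/-- The flow of left multiplication by the one-parameter group generated by a skew-Hermitian
matrix. -/
def skewFlow (X : Matrix (Fin l) (Fin l) ℂ) (hX : Xᴴ = -X) (t : ℝ) :
    Matrix.unitaryGroup (Fin l) ℂ :=
  ⟨NormedSpace.exp (t • X), by
    rw [Matrix.mem_unitaryGroup_iff', Matrix.star_eq_conjTranspose, ← Matrix.exp_conjTranspose,
      Matrix.conjTranspose_smul, hX, star_trivial, smul_neg,
      ← Matrix.exp_add_of_commute _ _ (Commute.refl (t • X)).neg_left, neg_add_cancel,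
      NormedSpace.exp_zero]⟩

theorem skewFlow_zero (X : Matrix (Fin l) (Fin l) ℂ) (hX : Xᴴ = -X) : skewFlow X hX 0 = 1 := by
  ext1
  simp [skewFlow]

theorem hasDerivAt_skewFlow_mul_apply (X : Matrix (Fin l) (Fin l) ℂ) (hX : Xᴴ = -X)
    (U : Matrix.unitaryGroup (Fin l) ℂ) (t : ℝ) (a b : Fin l) :
    HasDerivAt (fun t : ℝ => ((skewFlow X hX t * U : Matrix.unitaryGroup (Fin l) ℂ) :
      Matrix (Fin l) (Fin l) ℂ) a b)
      ((X * ((skewFlow X hX t * U : Matrix.unitaryGroup (Fin l) ℂ) :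
        Matrix (Fin l) (Fin l) ℂ)) a b) t := by
  have h (c : Fin l) : HasDerivAt (fun t : ℝ => (skewFlow X hX t : Matrix (Fin l) (Fin l) ℂ) a c)
      ((X * (skewFlow X hX t : Matrix (Fin l) (Fin l) ℂ)) a c) t := by
    open scoped Matrix.Norms.L2Operator in
    have h1 := hasDerivAt_exp_smul_const' (𝕂 := ℝ) X t
    exact hasDerivAt_pi.1 (hasDerivAt_pi.1 h1 a) c
  have h2 := HasDerivAt.fun_sum (u := Finset.univ) fun c _ =>
    (h c).mul_const ((U : Matrix (Fin l) (Fin l) ℂ) c b)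
  refine (h2.congr_deriv ?_).congr_of_eventuallyEq (Filter.Eventually.of_forall fun t => ?_)
  · rw [Submonoid.coe_mul, ← Matrix.mul_assoc, Matrix.mul_apply]
  · simp only [Submonoid.coe_mul, Matrix.mul_apply]

/-- Differentiating an integral over the unitary group along left translations. -/
theorem integral_eq_zero_of_hasDerivAt (μ : Measure (Matrix.unitaryGroup (Fin l) ℂ))
    [IsFiniteMeasure μ] [μ.IsMulLeftInvariant] {F F' : Matrix (Fin l) (Fin l) ℂ → ℂ}
    (hF : Continuous F) (hF' : Continuous F') {X : Matrix (Fin l) (Fin l) ℂ} (hX : Xᴴ = -X)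
    (h : ∀ (U : Matrix.unitaryGroup (Fin l) ℂ) (t : ℝ),
      HasDerivAt (fun t : ℝ => F (skewFlow X hX t * U : Matrix.unitaryGroup (Fin l) ℂ))
        (F' (skewFlow X hX t * U : Matrix.unitaryGroup (Fin l) ℂ)) t) :
    ∫ U : Matrix.unitaryGroup (Fin l) ℂ, F' U ∂μ = 0 := by
  obtain ⟨C, hC⟩ := isCompact_univ.exists_bound_of_continuousOn
    (f := fun U : Matrix.unitaryGroup (Fin l) ℂ => F' U)
    (hF'.comp continuous_subtype_val).continuousOn
  have hl (t : ℝ) : ∫ U : Matrix.unitaryGroup (Fin l) ℂ,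
      F (skewFlow X hX t * U : Matrix.unitaryGroup (Fin l) ℂ) ∂μ =
      ∫ U : Matrix.unitaryGroup (Fin l) ℂ, F U ∂μ :=
    integral_mul_left_eq_self (fun U : Matrix.unitaryGroup (Fin l) ℂ => F U) _
  have hc (t : ℝ) : Continuous fun U : Matrix.unitaryGroup (Fin l) ℂ =>
      (skewFlow X hX t * U : Matrix.unitaryGroup (Fin l) ℂ) := continuous_const_mul _
  have hd := (hasDerivAt_integral_of_dominated_loc_of_deriv_le (μ := μ) (𝕜 := ℝ)
    (F := fun (t : ℝ) (U : Matrix.unitaryGroup (Fin l) ℂ) =>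
      F (skewFlow X hX t * U : Matrix.unitaryGroup (Fin l) ℂ))
    (F' := fun (t : ℝ) (U : Matrix.unitaryGroup (Fin l) ℂ) =>
      F' (skewFlow X hX t * U : Matrix.unitaryGroup (Fin l) ℂ))
    (x₀ := (0 : ℝ)) (s := Set.univ) (bound := fun _ => C) Filter.univ_mem
    (Filter.Eventually.of_forall fun t =>
      (hF.comp (continuous_subtype_val.comp (hc t))).aestronglyMeasurable)
    ((hF.comp (continuous_subtype_val.comp (hc 0))).integrable_of_hasCompactSupport
      (HasCompactSupport.of_compactSpace _))
    (hF'.comp (continuous_subtype_val.comp (hc 0))).aestronglyMeasurable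
    (Filter.Eventually.of_forall fun U t _ => hC _ (Set.mem_univ _))
    (integrable_const C) (Filter.Eventually.of_forall fun U t _ => h U t)).2
  simp only [hl, skewFlow_zero, one_mul] at hd
  exact hd.unique (hasDerivAt_const _ _)

/-- Entrywise derivative of the powers of a matrix curve with derivative `X * V t`. -/
theorem hasDerivAt_pow_apply {V : ℝ → Matrix (Fin l) (Fin l) ℂ} {X : Matrix (Fin l) (Fin l) ℂ}
    {t : ℝ} (hV : ∀ a b, HasDerivAt (fun t => V t a b) ((X * V t) a b) t) (m : ℕ) (a b : Fin l) :
    HasDerivAt (fun t => (V t ^ m) a b) (powDeriv (V t) X m a b) t := by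
  induction m generalizing b with
  | zero => simpa [powDeriv] using hasDerivAt_const t ((1 : Matrix (Fin l) (Fin l) ℂ) a b)
  | succ m ih =>
    have h2 := HasDerivAt.fun_sum (u := Finset.univ) fun c _ => (ih c).mul (hV c b)
    have e : powDeriv (V t) X (m + 1) = powDeriv (V t) X m * V t + V t ^ m * (X * V t) := by
      rw [powDeriv, Finset.sum_range_succ, powDeriv, Finset.sum_mul]
      congr 1
      · refine Finset.sum_congr rfl fun s hs => ?_
        rw [Finset.mem_range] at hs
        rw [Nat.succ_sub hs.le, pow_succ, ← mul_assoc]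
      · simp [mul_assoc]
    refine (h2.congr_deriv ?_).congr_of_eventuallyEq (Filter.Eventually.of_forall fun t => ?_)
    · rw [e, Matrix.add_apply, Matrix.mul_apply, Matrix.mul_apply, Finset.sum_add_distrib]
    · simp only [pow_succ, Matrix.mul_apply, Pi.mul_apply]

theorem hasDerivAt_mixedDet {A : ℝ → Fin l → Matrix (Fin l) (Fin l) ℂ}
    {A' : Fin l → Matrix (Fin l) (Fin l) ℂ} {t : ℝ}
    (hA : ∀ k a b, HasDerivAt (fun t => A t k a b) (A' k a b) t) :
    HasDerivAt (fun t => mixedDet (A t))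
      (∑ k, mixedDet (Function.update (A t) k (A' k))) t := by
  simp only [mixedDet_apply]
  have h := HasDerivAt.fun_sum (u := Finset.univ) fun (σ : Equiv.Perm (Fin l)) _ =>
    HasDerivAt.fun_sum (u := Finset.univ) fun (τ : Equiv.Perm (Fin l)) _ =>
      (HasDerivAt.fun_finsetProd (u := Finset.univ) fun k _ => hA k (σ k) (τ k)).const_mul
        (((Equiv.Perm.sign σ : ℤ) : ℂ) * ((Equiv.Perm.sign τ : ℤ) : ℂ))
  refine h.congr_deriv ?_
  symm
  rw [Finset.sum_comm]
  refine Finset.sum_congr rfl fun σ _ => ?_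
  rw [Finset.sum_comm]
  refine Finset.sum_congr rfl fun τ _ => ?_
  rw [Finset.mul_sum]
  refine Finset.sum_congr rfl fun k _ => ?_
  rw [prod_update_apply, smul_eq_mul]
  ring

theorem hasDerivAt_det {V : ℝ → Matrix (Fin l) (Fin l) ℂ} {X : Matrix (Fin l) (Fin l) ℂ}
    {t : ℝ} (hV : ∀ a b, HasDerivAt (fun t => V t a b) ((X * V t) a b) t) :
    HasDerivAt (fun t => (V t).det) (X.trace * (V t).det) t := by
  have h := hasDerivAt_mixedDet (A := fun t _ => V t) (fun _ => hV)
  rw [sum_mixedDet_update_mul (fun _ => V t) X] at h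
  simp only [mixedDet_const] at h
  have h0 : ((Fintype.card (Fin l)).factorial : ℂ) ≠ 0 :=
    Nat.cast_ne_zero.2 (Nat.factorial_ne_zero _)
  have := h.const_mul ((Fintype.card (Fin l)).factorial : ℂ)⁻¹
  refine (this.congr_deriv ?_).congr_of_eventuallyEq (Filter.Eventually.of_forall fun t => ?_)
  · field_simp
  · simp only []; field_simp

end HaarLoop

section HaarMixedDet

variable {l : ℕ}

/-- The logarithmic derivative of `V ↦ star (det V) ^ N * mixedDet (B k * V ^ m k)` in the
direction `X * V`, on unitary matrices and for skew-Hermitian `X`. -/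
def mixedDetDeriv (N : ℕ) (m : Fin l → ℕ) (B : Fin l → Matrix (Fin l) (Fin l) ℂ)
    (X V : Matrix (Fin l) (Fin l) ℂ) : ℂ :=
  (-(N : ℂ) * X.trace) * mixedDet (fun k => B k * V ^ m k) +
    ∑ k, mixedDet (Function.update (fun k => B k * V ^ m k) k (B k * powDeriv V X (m k)))

theorem powDeriv_add_smul (V X Y : Matrix (Fin l) (Fin l) ℂ) (c : ℂ) (m : ℕ) :
    powDeriv V (X + c • Y) m = powDeriv V X m + c • powDeriv V Y m := by
  simp only [powDeriv, mul_add, add_mul, Finset.sum_add_distrib, Finset.smul_sum, mul_smul_comm,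
    smul_mul_assoc]

theorem mixedDetDeriv_add_smul (N : ℕ) (m : Fin l → ℕ) (B : Fin l → Matrix (Fin l) (Fin l) ℂ)
    (X Y V : Matrix (Fin l) (Fin l) ℂ) (c : ℂ) :
    mixedDetDeriv N m B (X + c • Y) V =
      mixedDetDeriv N m B X V + c * mixedDetDeriv N m B Y V := by
  simp only [mixedDetDeriv, powDeriv_add_smul, mul_add, mul_smul_comm,
    MultilinearMap.map_update_add, MultilinearMap.map_update_smul, Finset.sum_add_distrib,
    Matrix.trace_add, Matrix.trace_smul, smul_eq_mul, ← Finset.mul_sum]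
  ring

@[fun_prop]
theorem continuous_mixedDet {Y : Type*} [TopologicalSpace Y]
    {A : Y → Fin l → Matrix (Fin l) (Fin l) ℂ} (hA : ∀ k, Continuous fun y => A y k) :
    Continuous fun y => mixedDet (A y) := by
  simp only [mixedDet_apply]
  exact continuous_finsetSum _ fun σ _ => continuous_finsetSum _ fun τ _ =>
    continuous_const.mul (continuous_finsetProd _ fun k _ => (hA k).matrix_elem _ _)

theorem continuous_mixedDetDeriv (N : ℕ) (m : Fin l → ℕ)
    (B : Fin l → Matrix (Fin l) (Fin l) ℂ) (X : Matrix (Fin l) (Fin l) ℂ) :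
    Continuous (mixedDetDeriv N m B X) := by
  have h (k : Fin l) : Continuous fun V : Matrix (Fin l) (Fin l) ℂ => B k * powDeriv V X (m k) := by
    unfold powDeriv; fun_prop
  refine (continuous_const.mul (continuous_mixedDet fun k => by fun_prop)).add
    (continuous_finsetSum _ fun k _ => continuous_mixedDet fun j => ?_)
  rcases eq_or_ne j k with rfl | hj
  · simpa using h j
  · simp only [Function.update_of_ne hj]
    fun_prop

theorem integral_mixedDetDeriv_of_skew (μ : Measure (Matrix.unitaryGroup (Fin l) ℂ))
    [IsFiniteMeasure μ] [μ.IsMulLeftInvariant] (N : ℕ) (m : Fin l → ℕ)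
    (B : Fin l → Matrix (Fin l) (Fin l) ℂ) {X : Matrix (Fin l) (Fin l) ℂ} (hX : Xᴴ = -X) :
    ∫ U : Matrix.unitaryGroup (Fin l) ℂ, star (U : Matrix (Fin l) (Fin l) ℂ).det ^ N *
      mixedDetDeriv N m B X U ∂μ = 0 := by
  refine integral_eq_zero_of_hasDerivAt μ
    (F := fun V => star V.det ^ N * mixedDet fun k => B k * V ^ m k)
    (F' := fun V => star V.det ^ N * mixedDetDeriv N m B X V)
    ((by fun_prop : Continuous fun V : Matrix (Fin l) (Fin l) ℂ => star V.det ^ N).mul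
      (continuous_mixedDet fun k => by fun_prop))
    ((by fun_prop : Continuous fun V : Matrix (Fin l) (Fin l) ℂ => star V.det ^ N).mul
      (continuous_mixedDetDeriv N m B X)) hX fun U t => ?_
  have hV := hasDerivAt_skewFlow_mul_apply X hX U t
  have htr : star X.trace = -X.trace := by
    rw [← Matrix.trace_conjTranspose, hX, Matrix.trace_neg]
  have h1 := ((hasDerivAt_det hV).star).fun_pow N
  have h2 := hasDerivAt_mixedDet
    (A := fun t k => B k * (skewFlow X hX t * U : Matrix.unitaryGroup (Fin l) ℂ).1 ^ m k)
    (A' := fun k => B k *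
      powDeriv (skewFlow X hX t * U : Matrix.unitaryGroup (Fin l) ℂ).1 X (m k)) (t := t)
    (fun k a b => by
      simp only [Matrix.mul_apply (M := B k)]
      exact HasDerivAt.fun_sum fun c _ => (hasDerivAt_pow_apply hV (m k) c b).const_mul _)
  refine (h1.mul h2).congr_deriv ?_
  rw [mixedDetDeriv, star_mul', htr]
  rcases N with - | N
  · simp
  · simp only [Nat.add_sub_cancel]
    push_cast
    ring

theorem integrable_star_det_pow_mul (μ : Measure (Matrix.unitaryGroup (Fin l) ℂ))
    [IsFiniteMeasure μ] (N : ℕ) {H : Matrix (Fin l) (Fin l) ℂ → ℂ} (hH : Continuous H) :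
    Integrable (fun U : Matrix.unitaryGroup (Fin l) ℂ =>
      star (U : Matrix (Fin l) (Fin l) ℂ).det ^ N * H U) μ :=
  integrable_unitaryGroup μ (F := fun V => star V.det ^ N * H V) (by fun_prop)

theorem integral_mixedDetDeriv (μ : Measure (Matrix.unitaryGroup (Fin l) ℂ))
    [IsFiniteMeasure μ] [μ.IsMulLeftInvariant] (N : ℕ) (m : Fin l → ℕ)
    (B : Fin l → Matrix (Fin l) (Fin l) ℂ) (X : Matrix (Fin l) (Fin l) ℂ) :
    ∫ U : Matrix.unitaryGroup (Fin l) ℂ, star (U : Matrix (Fin l) (Fin l) ℂ).det ^ N *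
      mixedDetDeriv N m B X U ∂μ = 0 := by
  have hD (Y : Matrix (Fin l) (Fin l) ℂ) := integrable_star_det_pow_mul μ N
    (continuous_mixedDetDeriv N m B Y)
  have hS : ((1 / 2 : ℂ) • (X - Xᴴ))ᴴ = -((1 / 2 : ℂ) • (X - Xᴴ)) := by
    rw [Matrix.conjTranspose_smul, Matrix.conjTranspose_sub, Matrix.conjTranspose_conjTranspose,
      ← smul_neg, neg_sub]
    simp
  have hT : ((-Complex.I / 2) • (X + Xᴴ))ᴴ = -((-Complex.I / 2) • (X + Xᴴ)) := by
    rw [Matrix.conjTranspose_smul, Matrix.conjTranspose_add, Matrix.conjTranspose_conjTranspose,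
      ← neg_smul, add_comm]
    simp [neg_div]
  have hX : X = (1 / 2 : ℂ) • (X - Xᴴ) + Complex.I • ((-Complex.I / 2) • (X + Xᴴ)) := by
    rw [smul_smul, show Complex.I * (-Complex.I / 2) = 1 / 2 by
      linear_combination (-1 / 2 : ℂ) * Complex.I_mul_I]
    module
  rw [hX]
  simp only [mixedDetDeriv_add_smul, mul_add, mul_left_comm _ Complex.I]
  rw [integral_add (hD _) ((hD _).const_mul _), integral_const_mul,
    integral_mixedDetDeriv_of_skew μ N m B hS, integral_mixedDetDeriv_of_skew μ N m B hT]
  simp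

/-- The expectation of the mixed discriminant of powers of a unitary matrix, twisted by a power
of the conjugate determinant. -/
def haarMixedDet (μ : Measure (Matrix.unitaryGroup (Fin l) ℂ)) (N : ℕ) (m : Fin l → ℕ) : ℂ :=
  ∫ U : Matrix.unitaryGroup (Fin l) ℂ, star (U : Matrix (Fin l) (Fin l) ℂ).det ^ N *
    mixedDet (fun k => (U : Matrix (Fin l) (Fin l) ℂ) ^ m k) ∂μ

theorem integrable_haarMixedDet (μ : Measure (Matrix.unitaryGroup (Fin l) ℂ))
    [IsFiniteMeasure μ] (N : ℕ) (m : Fin l → ℕ) :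
    Integrable (fun U : Matrix.unitaryGroup (Fin l) ℂ =>
      star (U : Matrix (Fin l) (Fin l) ℂ).det ^ N *
        mixedDet (fun k => (U : Matrix (Fin l) (Fin l) ℂ) ^ m k)) μ :=
  integrable_star_det_pow_mul μ N (H := fun V => mixedDet fun k => V ^ m k)
    (continuous_mixedDet fun k => by fun_prop)

theorem haarMixedDet_loop_equation (μ : Measure (Matrix.unitaryGroup (Fin l) ℂ))
    [IsFiniteMeasure μ] [μ.IsMulLeftInvariant] (N : ℕ) (m : Fin l → ℕ) (i : Fin l) :
    ((m i : ℂ) - N) * haarMixedDet μ N m + ∑ k ∈ Finset.univ.erase i,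
      (∑ c ∈ Finset.Ioc 0 (m i), haarMixedDet μ N (transferExponent m i k c) -
        ∑ c ∈ Finset.Ioc 0 (m k), haarMixedDet μ N (transferExponent m i k c)) = 0 := by
  have h0 : ∑ a, ∑ b, ∫ U : Matrix.unitaryGroup (Fin l) ℂ,
      star (U : Matrix (Fin l) (Fin l) ℂ).det ^ N * mixedDetDeriv N m
        (Function.update 1 i (Matrix.single b a 1)) (Matrix.single a b 1) U ∂μ = 0 := by
    simp only [integral_mixedDetDeriv, Finset.sum_const_zero]
  have hD (a b : Fin l) := integrable_star_det_pow_mul μ N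
    (continuous_mixedDetDeriv N m (Function.update 1 i (Matrix.single b a 1))
      (Matrix.single a b 1))
  rw [← h0, Finset.sum_congr rfl fun a _ => (integral_finsetSum _ fun b _ => hD a b).symm,
    ← integral_finsetSum _ fun a _ => integrable_finsetSum _ fun b _ => hD a b]
  have hI := integrable_haarMixedDet μ N
  have hk (k : Fin l) (M : ℕ) := integrable_finsetSum (Finset.Ioc 0 M) fun c _ =>
    hI (transferExponent m i k c)
  have hd (k : Fin l) : Integrable (fun U : Matrix.unitaryGroup (Fin l) ℂ =>
      ∑ c ∈ Finset.Ioc 0 (m i),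
        star (U : Matrix (Fin l) (Fin l) ℂ).det ^ N *
          mixedDet (fun j => (U : Matrix (Fin l) (Fin l) ℂ) ^ transferExponent m i k c j) -
        ∑ c ∈ Finset.Ioc 0 (m k), star (U : Matrix (Fin l) (Fin l) ℂ).det ^ N *
          mixedDet (fun j => (U : Matrix (Fin l) (Fin l) ℂ) ^ transferExponent m i k c j)) μ :=
    (hk k (m i)).sub (hk k (m k))
  have hpt (U : Matrix.unitaryGroup (Fin l) ℂ) : ∑ a, ∑ b,
      star (U : Matrix (Fin l) (Fin l) ℂ).det ^ N * mixedDetDeriv N m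
        (Function.update 1 i (Matrix.single b a 1)) (Matrix.single a b 1) U =
      ((m i : ℂ) - N) * (star (U : Matrix (Fin l) (Fin l) ℂ).det ^ N *
        mixedDet (fun k => (U : Matrix (Fin l) (Fin l) ℂ) ^ m k)) +
      ∑ k ∈ Finset.univ.erase i, (∑ c ∈ Finset.Ioc 0 (m i),
        star (U : Matrix (Fin l) (Fin l) ℂ).det ^ N *
          mixedDet (fun j => (U : Matrix (Fin l) (Fin l) ℂ) ^ transferExponent m i k c j) -
        ∑ c ∈ Finset.Ioc 0 (m k), star (U : Matrix (Fin l) (Fin l) ℂ).det ^ N *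
          mixedDet (fun j => (U : Matrix (Fin l) (Fin l) ℂ) ^ transferExponent m i k c j)) := by
    simp only [← Finset.mul_sum, ← mul_sub, mixedDetDeriv, sum_mixedDet_powDeriv]
    ring
  simp only [hpt]
  rw [integral_add ((hI m).const_mul _) (integrable_finsetSum _ fun k _ => hd k),
    integral_const_mul, integral_finsetSum _ fun k _ => hd k]
  congr 1
  refine Finset.sum_congr rfl fun k _ => ?_
  rw [integral_sub (hk k _) (hk k _), integral_finsetSum _ fun c _ => hI _,
    integral_finsetSum _ fun c _ => hI _]
  rfl

/-- Twisted Haar expectations of mixed discriminants of powers are mixed discriminants of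
truncated shifts. -/
theorem haarMixedDet_eq (μ : Measure (Matrix.unitaryGroup (Fin l) ℂ))
    [IsProbabilityMeasure μ] [μ.IsMulLeftInvariant] (N : ℕ) (m : Fin l → ℕ) :
    haarMixedDet μ N m = mixedDet (fun k => shiftMatrix ℂ l ((m k : ℤ) - N)) := by
  rw [← sub_eq_zero]
  refine eq_zero_of_loop_equation N
    (fun m => haarMixedDet μ N m - mixedDet (fun k => shiftMatrix ℂ l ((m k : ℤ) - N)))
    (fun m π => ?_) (fun m i => ?_) ?_ m
  · simp only [haarMixedDet]
    rw [mixedDet_comp_perm (fun k => shiftMatrix ℂ l ((m k : ℤ) - N)) π]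
    have h (V : Matrix (Fin l) (Fin l) ℂ) := mixedDet_comp_perm (fun k => V ^ m k) π
    simp only [h]
  · have h1 := haarMixedDet_loop_equation μ N m i
    have h2 := mixedDet_shiftMatrix_loop_equation (R := ℂ) N m i
    simp only [Finset.sum_sub_distrib] at h1 h2 ⊢
    linear_combination h1 - h2
  · have h (U : Matrix.unitaryGroup (Fin l) ℂ) : star (U : Matrix (Fin l) (Fin l) ℂ).det ^ N *
        mixedDet (fun _ => (U : Matrix (Fin l) (Fin l) ℂ) ^ N) = (l.factorial : ℂ) := by
      have h1 : star (U : Matrix (Fin l) (Fin l) ℂ).det * (U : Matrix (Fin l) (Fin l) ℂ).det = 1 :=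
        (Unitary.mem_iff.1 (Matrix.det_of_mem_unitary U.2)).1
      rw [mixedDet_const, Matrix.det_pow, mul_left_comm, ← mul_pow, h1, one_pow, mul_one,
        Fintype.card_fin]
    simp only [haarMixedDet, h, sub_self, shiftMatrix_zero]
    simp [mixedDet_const]

end HaarMixedDet

theorem factorial_mul_det_sum_smul {R α n : Type*} [CommRing R] [Fintype n] [DecidableEq n]
    [DecidableEq α] (s : Finset α) (c : α → R) (M : α → Matrix n n R) :
    ((Fintype.card n).factorial : R) * (∑ p ∈ s, c p • M p).det =
      ∑ r ∈ Fintype.piFinset fun _ : n => s, (∏ k, c (r k)) * mixedDet fun k => M (r k) := by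
  rw [← mixedDet_const, MultilinearMap.map_sum_finset]
  refine Finset.sum_congr rfl fun r _ => ?_
  rw [MultilinearMap.map_smul_univ, smul_eq_mul]

theorem det_aeval_mul_det_aeval_conjTranspose {l : ℕ} (f g : Polynomial ℂ)
    (U : Matrix.unitaryGroup (Fin l) ℂ) :
    (Polynomial.aeval (U : Matrix (Fin l) (Fin l) ℂ) f).det *
        (Polynomial.aeval ((U : Matrix (Fin l) (Fin l) ℂ)ᴴ) g).det =
      star (U : Matrix (Fin l) (Fin l) ℂ).det ^ g.natDegree *
        (∑ p ∈ Finset.range (f.natDegree + 1) ×ˢ Finset.range (g.natDegree + 1),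
          (f.coeff p.1 * g.coeff p.2) •
            (U : Matrix (Fin l) (Fin l) ℂ) ^ (p.1 + (g.natDegree - p.2))).det := by
  set V : Matrix (Fin l) (Fin l) ℂ := U.1
  have hVV : V * Vᴴ = 1 := Matrix.mem_unitaryGroup_iff.1 U.2
  have hpow (b : ℕ) (hb : b ≤ g.natDegree) :
      V ^ g.natDegree * Vᴴ ^ b = V ^ (g.natDegree - b) := by
    have hc : Commute V Vᴴ := by
      rw [commute_iff_eq, hVV]
      exact (Matrix.mem_unitaryGroup_iff'.1 U.2).symm
    rw [← Nat.sub_add_cancel hb, pow_add, mul_assoc, ← hc.mul_pow, hVV, one_pow, mul_one,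
      Nat.sub_add_cancel hb]
  have hg : V ^ g.natDegree * Polynomial.aeval Vᴴ g =
      ∑ b ∈ Finset.range (g.natDegree + 1), g.coeff b • V ^ (g.natDegree - b) := by
    rw [Polynomial.aeval_eq_sum_range, Finset.mul_sum]
    refine Finset.sum_congr rfl fun b hb => ?_
    rw [mul_smul_comm, hpow b (Nat.lt_succ_iff.1 (Finset.mem_range.1 hb))]
  have hsum : ∑ p ∈ Finset.range (f.natDegree + 1) ×ˢ Finset.range (g.natDegree + 1),
      (f.coeff p.1 * g.coeff p.2) • V ^ (p.1 + (g.natDegree - p.2)) =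
      Polynomial.aeval V f * (V ^ g.natDegree * Polynomial.aeval Vᴴ g) := by
    rw [hg, Polynomial.aeval_eq_sum_range, Finset.sum_mul_sum, Finset.sum_product]
    simp only [smul_mul_smul_comm, pow_add]
  have hdet : star V.det * V.det = 1 := (Unitary.mem_iff.1 (Matrix.det_of_mem_unitary U.2)).1
  rw [hsum, Matrix.det_mul, Matrix.det_mul, Matrix.det_pow]
  have := congrArg (· ^ g.natDegree) hdet
  simp only [mul_pow, one_pow] at this
  linear_combination (-(Polynomial.aeval V f).det * (Polynomial.aeval Vᴴ g).det) * this

theorem sum_smul_shiftMatrix {l : ℕ} (f g : Polynomial ℂ) :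
    ∑ p ∈ Finset.range (f.natDegree + 1) ×ˢ Finset.range (g.natDegree + 1),
        (f.coeff p.1 * g.coeff p.2) •
          shiftMatrix ℂ l (((p.1 + (g.natDegree - p.2) : ℕ) : ℤ) - g.natDegree) =
      Matrix.of fun j k : Fin l =>
        ∑' a : ℕ, f.coeff a * coeffZ g ((a : ℤ) + (j : ℕ) - (k : ℕ)) := by
  ext j k
  rw [Matrix.of_apply, tsum_eq_sum (s := Finset.range (f.natDegree + 1)), Matrix.sum_apply,
    Finset.sum_product]
  · refine Finset.sum_congr rfl fun a _ => ?_
    simp only [Matrix.smul_apply, smul_eq_mul, shiftMatrix, Matrix.of_apply, mul_assoc,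
      ← Finset.mul_sum]
    congr 1
    have h (b : ℕ) (hb : b ∈ Finset.range (g.natDegree + 1)) :
        (g.coeff b * if ((k : ℕ) : ℤ) - (j : ℕ) =
          ((a + (g.natDegree - b) : ℕ) : ℤ) - g.natDegree then 1 else 0) =
        if (b : ℤ) = (a : ℤ) + (j : ℕ) - (k : ℕ) then g.coeff b else 0 := by
      rw [Finset.mem_range] at hb
      rw [mul_ite, mul_one, mul_zero]
      exact if_congr (by omega) rfl rfl
    rw [Finset.sum_congr rfl h, coeffZ]
    split_ifs with h0
    · obtain ⟨d, hd⟩ := Int.eq_ofNat_of_zero_le h0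
      simp only [hd, Nat.cast_inj, Finset.sum_ite_eq', Finset.mem_range, Int.toNat_natCast]
      split_ifs with h1
      · rfl
      · rw [Polynomial.coeff_eq_zero_of_natDegree_lt (by omega)]
    · exact Finset.sum_eq_zero fun b _ => if_neg (by omega)
  · intro a ha
    rw [Finset.mem_range] at ha
    rw [Polynomial.coeff_eq_zero_of_natDegree_lt (by omega), zero_mul]

/-- For polynomials `f`, `g` and `l > 0`,
`E_{U∈U(l)} det(f(U))·det(g(U*)) = det_{0≤j,k<l} ( Σ_{a≥0} f_a · g_{a+j−k} )`,
a Toeplitz determinant (coefficients of `g` at negative indices are `0`). -/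
theorem unitary_integral_eq_toeplitz_det (l : ℕ) (hl : 0 < l)
    (f g : Polynomial ℂ)
    (μ : Measure (Matrix.unitaryGroup (Fin l) ℂ))
    [μ.IsHaarMeasure] [IsProbabilityMeasure μ] :
    ∫ U, (Polynomial.aeval (U : Matrix (Fin l) (Fin l) ℂ) f).det *
        (Polynomial.aeval ((U : Matrix (Fin l) (Fin l) ℂ)ᴴ) g).det ∂μ =
      Matrix.det (Matrix.of fun j k : Fin l =>
        ∑' a : ℕ, f.coeff a * coeffZ g ((a : ℤ) + (j : ℕ) - (k : ℕ))) := by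
  have h0 : ((Fintype.card (Fin l)).factorial : ℂ) ≠ 0 :=
    Nat.cast_ne_zero.2 (Nat.factorial_ne_zero _)
  refine mul_left_cancel₀ h0 ?_
  simp only [det_aeval_mul_det_aeval_conjTranspose]
  rw [← integral_const_mul, ← sum_smul_shiftMatrix, factorial_mul_det_sum_smul]
  simp only [mul_left_comm ((Fintype.card (Fin l)).factorial : ℂ),
    factorial_mul_det_sum_smul _ _ fun p : ℕ × ℕ => (_ : Matrix (Fin l) (Fin l) ℂ) ^ _,
    Finset.mul_sum]
  have hI := integrable_haarMixedDet μ g.natDegree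
  rw [integral_finsetSum]
  · refine Finset.sum_congr rfl fun r _ => ?_
    have h := haarMixedDet_eq μ g.natDegree fun k => (r k).1 + (g.natDegree - (r k).2)
    rw [← h, haarMixedDet, ← integral_const_mul]
    simp only [mul_left_comm]
  · intro r _
    have h := (hI fun k => (r k).1 + (g.natDegree - (r k).2)).const_mul
      (∏ k, (f.coeff (r k).1 * g.coeff (r k).2))
    simpa only [mul_left_comm] using h
end
end

section
/- For every nonnegative integer l and every real t, Σ_{n≥0} f_{n,l} · t^{2n}/(n!)² = det_{0≤j,k<l} ( I_{j−k}(2t) ); that is, the generating function of the numbers of permutations of {1,…,n} with longest increasing subsequence of length at most l equals the l×l Toeplitz determinant of modified Bessel functions. -/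
noncomputable section

/-- `lisLE π l` means the longest increasing subsequence of the permutation `π`
has length at most `l`. -/
def lisLE {N : ℕ} (π : Equiv.Perm (Fin N)) (l : ℕ) : Prop :=
  ∀ (k : ℕ) (f : Fin k → Fin N), StrictMono f → StrictMono (fun i => π (f i)) → k ≤ l

/-- `f_{n,l}`: the number of permutations of `{1,…,n}` whose longest increasing
subsequence has length at most `l`. -/
def permCount (n l : ℕ) : ℕ :=
  Nat.card {π : Equiv.Perm (Fin n) // lisLE π l}

/-- The modified Bessel function of the first kind:
`besselI j t = I_j(2t) = Σ_{m≥0} t^{2m+|j|}/(m!·(m+|j|)!)`. -/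
def besselI (j : ℤ) (t : ℝ) : ℝ :=
  ∑' m : ℕ, t ^ (2 * m + j.natAbs) /
    ((Nat.factorial m : ℝ) * (Nat.factorial (m + j.natAbs) : ℝ))

/-- Antitone sequences of naturals that reach `0`: integer partitions with unboundedly many parts. -/
abbrev Shape := {c : ℕ → ℕ // Antitone c ∧ ∃ k, c k = 0}

namespace Shape

instance : Zero Shape := ⟨⟨0, antitone_const, 0, rfl⟩⟩

/-- `κ` arises from `μ` by adding one cell. -/
def Cover (μ κ : Shape) : Prop := ∃ i, κ.1 = μ.1 + Pi.single i 1

/-- `κ` arises from `μ` by adding at most one cell. -/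
def WeakCover (μ κ : Shape) : Prop := κ = μ ∨ Cover μ κ

/-- Fomin's local growth rule for a unit square with corners `ρ` (bottom left), `μ`, `ν` and
`κ` (top right), where `x` says that the square is marked. -/
inductive Growth (x : Prop) (ρ μ ν κ : Shape) : Prop
  | diamond (hx : ¬x) (hne : μ ≠ ν) (h₁ : WeakCover ρ μ) (h₂ : WeakCover ρ ν)
      (h₃ : WeakCover μ κ) (h₄ : WeakCover ν κ)
  | const (hx : ¬x) (h₁ : ρ = μ) (h₂ : ρ = ν) (h₃ : ρ = κ)
  | mark (hx : x) (h₁ : ρ = μ) (h₂ : ρ = ν) (k : ℕ) (h₃ : κ.1 = μ.1 + Pi.single k 1)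
      (h₄ : μ.1 k = 0)
  | bump (hx : ¬x) (h₁ : μ = ν) (i k : ℕ) (h₂ : μ.1 = ρ.1 + Pi.single i 1)
      (h₃ : κ.1 = μ.1 + Pi.single k 1) (h₄ : μ.1 k = μ.1 i)

theorem add_single_apply (c : ℕ → ℕ) (i m : ℕ) :
    (c + Pi.single i 1 : ℕ → ℕ) m = c m + if m = i then 1 else 0 := by
  simp [Pi.single_apply]

theorem add_single_injective {c : ℕ → ℕ} {i j : ℕ}
    (h : c + Pi.single i 1 = c + Pi.single j 1) : i = j := by
  by_contra hne
  simpa [Pi.single_apply, hne] using congrFun h i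

theorem WeakCover.apply_eq_or {μ κ : Shape} (h : WeakCover μ κ) :
    ∃ i, ∀ m, κ.1 m = μ.1 m ∨ (m = i ∧ κ.1 m = μ.1 m + 1) := by
  rcases h with rfl | ⟨i, hi⟩
  · exact ⟨0, fun m => Or.inl rfl⟩
  · refine ⟨i, fun m => ?_⟩
    rw [hi, add_single_apply]
    split_ifs with h <;> simp [h]

theorem WeakCover.exists_ne {μ κ : Shape} (h : WeakCover μ κ) (hne : κ ≠ μ) :
    ∃ i, ∀ m, κ.1 m = μ.1 m + if m = i then 1 else 0 := by
  rcases h with rfl | ⟨i, hi⟩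
  · exact (hne rfl).elim
  · exact ⟨i, fun m => by rw [hi, add_single_apply]⟩

theorem eq_inf {ρ μ ν : Shape} (h₁ : WeakCover ρ μ) (h₂ : WeakCover ρ ν) (hne : μ ≠ ν) :
    ρ.1 = μ.1 ⊓ ν.1 := by
  by_cases e₁ : μ = ρ
  · subst e₁
    obtain ⟨i, hi⟩ := h₂.apply_eq_or
    funext m
    have := hi m
    simp only [Pi.inf_apply]; omega
  by_cases e₂ : ν = ρ
  · subst e₂
    obtain ⟨i, hi⟩ := h₁.apply_eq_or
    funext m
    have := hi m
    simp only [Pi.inf_apply]; omega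
  obtain ⟨i, hi⟩ := h₁.exists_ne e₁
  obtain ⟨j, hj⟩ := h₂.exists_ne e₂
  have hij : i ≠ j := by
    rintro rfl
    exact hne (Subtype.ext (funext fun m => (hi m).trans (hj m).symm))
  funext m
  have := hi m
  have := hj m
  simp only [Pi.inf_apply]
  split_ifs at * <;> omega

theorem eq_sup {μ ν κ : Shape} (h₁ : WeakCover μ κ) (h₂ : WeakCover ν κ) (hne : μ ≠ ν) :
    κ.1 = μ.1 ⊔ ν.1 := by
  by_cases e₁ : κ = μ
  · subst e₁
    obtain ⟨i, hi⟩ := h₂.apply_eq_or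
    funext m
    have := hi m
    simp only [Pi.sup_apply]; omega
  by_cases e₂ : κ = ν
  · subst e₂
    obtain ⟨i, hi⟩ := h₁.apply_eq_or
    funext m
    have := hi m
    simp only [Pi.sup_apply]; omega
  obtain ⟨i, hi⟩ := h₁.exists_ne e₁
  obtain ⟨j, hj⟩ := h₂.exists_ne e₂
  have hij : i ≠ j := by
    rintro rfl
    exact hne (Subtype.ext (funext fun m => by have := hi m; have := hj m; omega))
  funext m
  have := hi m
  have := hj m
  simp only [Pi.sup_apply]
  split_ifs at * <;> omega

theorem exists_sup {ρ μ ν : Shape} (h₁ : WeakCover ρ μ) (h₂ : WeakCover ρ ν) (hne : μ ≠ ν) :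
    ∃ κ, WeakCover μ κ ∧ WeakCover ν κ := by
  by_cases e₁ : μ = ρ
  · subst e₁; exact ⟨ν, h₂, Or.inl rfl⟩
  by_cases e₂ : ν = ρ
  · subst e₂; exact ⟨μ, Or.inl rfl, h₁⟩
  obtain ⟨i, hi⟩ := h₁.exists_ne e₁
  obtain ⟨j, hj⟩ := h₂.exists_ne e₂
  have hij : i ≠ j := by
    rintro rfl
    exact hne (Subtype.ext (funext fun m => (hi m).trans (hj m).symm))
  obtain ⟨a, ha⟩ := μ.2.2
  obtain ⟨b, hb⟩ := ν.2.2
  refine ⟨⟨μ.1 ⊔ ν.1, μ.2.1.sup ν.2.1, max a b, ?_⟩, Or.inr ⟨j, ?_⟩, Or.inr ⟨i, ?_⟩⟩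
  · have := μ.2.1 (le_max_left a b)
    have := ν.2.1 (le_max_right a b)
    simp only [Pi.sup_apply]; omega
  all_goals
    funext m
    have := hi m
    have := hj m
    rw [add_single_apply]
    simp only [Pi.sup_apply]
    split_ifs at * <;> omega

theorem exists_inf {μ ν κ : Shape} (h₁ : WeakCover μ κ) (h₂ : WeakCover ν κ) (hne : μ ≠ ν) :
    ∃ ρ, WeakCover ρ μ ∧ WeakCover ρ ν := by
  by_cases e₁ : κ = μ
  · subst e₁; exact ⟨ν, h₂, Or.inl rfl⟩
  by_cases e₂ : κ = ν
  · subst e₂; exact ⟨μ, Or.inl rfl, h₁⟩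
  obtain ⟨i, hi⟩ := h₁.exists_ne e₁
  obtain ⟨j, hj⟩ := h₂.exists_ne e₂
  have hij : i ≠ j := by
    rintro rfl
    exact hne (Subtype.ext (funext fun m => by have := hi m; have := hj m; omega))
  obtain ⟨a, ha⟩ := μ.2.2
  refine ⟨⟨μ.1 ⊓ ν.1, μ.2.1.inf ν.2.1, a, ?_⟩, Or.inr ⟨j, ?_⟩, Or.inr ⟨i, ?_⟩⟩
  · simp [ha]
  all_goals
    funext m
    have := hi m
    have := hj m
    rw [add_single_apply]
    simp only [Pi.inf_apply]
    split_ifs at * <;> omega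

theorem exists_add_single (μ : Shape) (i : ℕ) :
    ∃ (κ : Shape) (k : ℕ), κ.1 = μ.1 + Pi.single k 1 ∧ μ.1 k = μ.1 i := by
  classical
  have hex : ∃ k, μ.1 k ≤ μ.1 i := ⟨i, le_rfl⟩
  have hk := Nat.find_spec hex
  have hmin : ∀ m < Nat.find hex, μ.1 i < μ.1 m := fun m hm => not_le.mp (Nat.find_min hex hm)
  have hle : Nat.find hex ≤ i := Nat.find_min' hex le_rfl
  generalize Nat.find hex = k at *
  have := μ.2.1 hle
  obtain ⟨z, hz⟩ := μ.2.2
  refine ⟨⟨μ.1 + Pi.single k 1, antitone_nat_of_succ_le fun m => ?_, z + k + 1, ?_⟩, k, rfl,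
    by omega⟩
  · rw [add_single_apply, add_single_apply]
    have := μ.2.1 (Nat.le_succ m)
    have := hmin m
    have : m + 1 = k → μ.1 (m + 1) = μ.1 k := congrArg μ.1
    simp only [Nat.succ_eq_add_one] at *
    split_ifs <;> omega
  · rw [add_single_apply]
    have := μ.2.1 (show z ≤ z + k + 1 by omega)
    split_ifs <;> omega

theorem exists_sub_single (μ : Shape) (k : ℕ) (hk : μ.1 k ≠ 0) :
    ∃ (ρ : Shape) (i : ℕ), μ.1 = ρ.1 + Pi.single i 1 ∧ μ.1 k = μ.1 i := by
  classical
  have hex : ∃ i, μ.1 i < μ.1 k := by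
    obtain ⟨z, hz⟩ := μ.2.2
    exact ⟨z, by omega⟩
  have hlt := Nat.find_spec hex
  have hmin : ∀ m < Nat.find hex, μ.1 k ≤ μ.1 m := fun m hm => not_lt.mp (Nat.find_min hex hm)
  generalize Nat.find hex = j at *
  have hkj : k < j := by
    by_contra h
    have := μ.2.1 (not_lt.mp h)
    omega
  obtain ⟨i, rfl⟩ : ∃ i, j = i + 1 := ⟨j - 1, by omega⟩
  have h₁ := μ.2.1 (show k ≤ i by omega)
  have h₂ := hmin i (by omega)
  obtain ⟨z, hz⟩ := μ.2.2
  refine ⟨⟨fun m => μ.1 m - if m = i then 1 else 0, antitone_nat_of_succ_le fun m => ?_, z, ?_⟩, i,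
    ?_, by omega⟩
  · have := μ.2.1 (Nat.le_succ m)
    simp only [Nat.succ_eq_add_one] at *
    split_ifs <;> subst_vars <;> omega
  · simp [hz]
  · funext m
    rw [add_single_apply]
    dsimp only
    split_ifs <;> subst_vars <;> omega

namespace Growth

variable {x y : Prop} {ρ ρ' μ ν κ κ' : Shape}

theorem swap (h : Growth x ρ μ ν κ) : Growth x ρ ν μ κ := by
  cases h with
  | diamond hx hne h₁ h₂ h₃ h₄ => exact .diamond hx hne.symm h₂ h₁ h₄ h₃
  | const hx h₁ h₂ h₃ => exact .const hx h₂ h₁ h₃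
  | mark hx h₁ h₂ k h₃ h₄ => subst h₁ h₂; exact .mark hx rfl rfl k h₃ h₄
  | bump hx h₁ i k h₂ h₃ h₄ => subst h₁; exact .bump hx rfl i k h₂ h₃ h₄

theorem weakCover_left (h : Growth x ρ μ ν κ) : WeakCover ρ μ := by
  cases h with
  | diamond hx hne h₁ h₂ h₃ h₄ => exact h₁
  | const hx h₁ h₂ h₃ => exact Or.inl h₁.symm
  | mark hx h₁ h₂ k h₃ h₄ => exact Or.inl h₁.symm
  | bump hx h₁ i k h₂ h₃ h₄ => exact Or.inr ⟨i, h₂⟩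

theorem weakCover_right (h : Growth x ρ μ ν κ) : WeakCover μ κ := by
  cases h with
  | diamond hx hne h₁ h₂ h₃ h₄ => exact h₃
  | const hx h₁ h₂ h₃ => exact Or.inl (h₃.symm.trans h₁)
  | mark hx h₁ h₂ k h₃ h₄ => exact Or.inr ⟨k, h₃⟩
  | bump hx h₁ i k h₂ h₃ h₄ => exact Or.inr ⟨k, h₃⟩

theorem _root_.Shape.ne_of_eq_add_single {μ κ : Shape} {k : ℕ} (h : κ.1 = μ.1 + Pi.single k 1) :
    κ ≠ μ := by
  rintro rfl
  have := congrFun h k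
  rw [add_single_apply] at this
  simp at this

theorem eq_of_mark (h : Growth x ρ μ ν κ) (hx : x) : ρ = μ := by
  cases h with
  | mark hx h₁ h₂ k h₃ h₄ => exact h₁
  | _ => contradiction

theorem eq_iff (h : Growth x ρ μ ν κ) : ν = κ ↔ ρ = μ ∧ ¬x := by
  cases h with
  | diamond hx hne h₁ h₂ h₃ h₄ =>
    simp only [hx, not_false_eq_true, and_true]
    have e₁ := eq_inf h₁ h₂ hne
    have e₂ := eq_sup h₃ h₄ hne
    rw [Subtype.ext_iff, Subtype.ext_iff, e₁, e₂, eq_comm, sup_eq_right, inf_eq_left]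
  | const hx h₁ h₂ h₃ => subst h₁ h₂ h₃; simp [hx]
  | mark hx h₁ h₂ k h₃ h₄ =>
    subst h₁ h₂
    simp [hx, (ne_of_eq_add_single h₃).symm]
  | bump hx h₁ i k h₂ h₃ h₄ =>
    subst h₁
    simp [(ne_of_eq_add_single h₃).symm, (ne_of_eq_add_single h₂).symm]

theorem exists_forward (h₁ : WeakCover ρ μ) (h₂ : WeakCover ρ ν) (hx : x → ρ = μ ∧ ρ = ν) :
    ∃ κ, Growth x ρ μ ν κ := by
  by_cases hx' : x
  · obtain ⟨rfl, rfl⟩ := hx hx'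
    obtain ⟨z, hz⟩ := ρ.2.2
    obtain ⟨κ, k, h, hk⟩ := exists_add_single ρ z
    exact ⟨κ, .mark hx' rfl rfl k h (hk.trans hz)⟩
  by_cases hne : μ = ν
  · subst hne
    rcases h₁ with rfl | ⟨i, hi⟩
    · exact ⟨_, .const hx' rfl rfl rfl⟩
    · obtain ⟨κ, k, h, hk⟩ := exists_add_single μ i
      exact ⟨κ, .bump hx' rfl i k hi h hk⟩
  · obtain ⟨κ, h₃, h₄⟩ := exists_sup h₁ h₂ hne
    exact ⟨κ, .diamond hx' hne h₁ h₂ h₃ h₄⟩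

theorem exists_backward (h₁ : WeakCover μ κ) (h₂ : WeakCover ν κ) :
    ∃ (ρ : Shape) (x : Prop), Growth x ρ μ ν κ := by
  by_cases hne : μ = ν
  · subst hne
    rcases h₁ with rfl | ⟨k, hk⟩
    · exact ⟨_, False, .const id rfl rfl rfl⟩
    · by_cases hz : μ.1 k = 0
      · exact ⟨μ, True, .mark trivial rfl rfl k hk hz⟩
      · obtain ⟨ρ, i, h, hi⟩ := exists_sub_single μ k hz
        exact ⟨ρ, False, .bump id rfl i k h hk hi⟩
  · obtain ⟨ρ, h₃, h₄⟩ := exists_inf h₁ h₂ hne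
    exact ⟨ρ, False, .diamond id hne h₃ h₄ h₁ h₂⟩

theorem eq_of_add_single {k k' : ℕ} (h : κ.1 = μ.1 + Pi.single k 1)
    (h' : κ'.1 = μ.1 + Pi.single k' 1) (hk : μ.1 k = μ.1 k') : κ = κ' := by
  have e₁ := congrFun h
  have e₂ := congrFun h'
  simp only [add_single_apply] at e₁ e₂
  have hkk : k = k' := by
    rcases lt_trichotomy k k' with hlt | heq | hlt
    · have := κ'.2.1 hlt.le
      rw [e₂, e₂, if_pos rfl, if_neg hlt.ne] at this
      omega
    · exact heq
    · have := κ.2.1 hlt.le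
      rw [e₁, e₁, if_pos rfl, if_neg hlt.ne] at this
      omega
  subst hkk
  exact Subtype.ext (h.trans h'.symm)

theorem eq_of_sub_single {i i' : ℕ} (h : μ.1 = ρ.1 + Pi.single i 1)
    (h' : μ.1 = ρ'.1 + Pi.single i' 1) (hi : μ.1 i = μ.1 i') : ρ = ρ' := by
  have e₁ := congrFun h
  have e₂ := congrFun h'
  simp only [add_single_apply] at e₁ e₂
  have hii : i = i' := by
    rcases lt_trichotomy i i' with hlt | heq | hlt
    · have := ρ.2.1 hlt.le
      have a := e₁ i
      have b := e₁ i'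
      rw [if_pos rfl] at a
      rw [if_neg hlt.ne'] at b
      omega
    · exact heq
    · have := ρ'.2.1 hlt.le
      have a := e₂ i
      have b := e₂ i'
      rw [if_pos rfl] at b
      rw [if_neg hlt.ne'] at a
      omega
  subst hii
  exact Subtype.ext (add_right_cancel (h.symm.trans h'))

theorem unique_forward (h : Growth x ρ μ ν κ) (h' : Growth x ρ μ ν κ') : κ = κ' := by
  cases h with
  | diamond hx hne h₁ h₂ h₃ h₄ =>
    cases h' with
    | diamond hx hne h₁' h₂' h₃' h₄' =>
      exact Subtype.ext ((eq_sup h₃ h₄ hne).trans (eq_sup h₃' h₄' hne).symm)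
    | const hx e₁ e₂ _ => exact (hne (e₁.symm.trans e₂)).elim
    | mark hx' => contradiction
    | bump hx h₁ => contradiction
  | const hx h₁ h₂ h₃ =>
    cases h' with
    | diamond _ hne => exact (hne (h₁.symm.trans h₂)).elim
    | const hx _ _ h => exact h₃.symm.trans h
    | mark hx' => contradiction
    | bump hx _ i k h => exact (ne_of_eq_add_single h h₁.symm).elim
  | mark hx h₁ h₂ k h₃ h₄ =>
    cases h' with
    | mark _ _ _ k' h₃' h₄' => exact eq_of_add_single h₃ h₃' (h₄.trans h₄'.symm)
    | _ => contradiction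
  | bump hx h₁ i k h₂ h₃ h₄ =>
    cases h' with
    | diamond _ hne => contradiction
    | const hx e₁ => exact (ne_of_eq_add_single h₂ e₁.symm).elim
    | mark hx' => contradiction
    | bump hx _ i' k' h₂' h₃' h₄' =>
      refine eq_of_add_single h₃ h₃' ?_
      have : i = i' := add_single_injective (h₂.symm.trans h₂')
      rw [h₄, h₄', this]

theorem unique_backward (h : Growth x ρ μ ν κ) (h' : Growth y ρ' μ ν κ) :
    ρ = ρ' ∧ (x ↔ y) := by
  cases h with
  | diamond hx hne h₁ h₂ h₃ h₄ =>
    cases h' with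
    | diamond hy hne h₁' h₂' h₃' h₄' =>
      exact ⟨Subtype.ext ((eq_inf h₁ h₂ hne).trans (eq_inf h₁' h₂' hne).symm), by tauto⟩
    | const hx e₁ e₂ _ => exact (hne (e₁.symm.trans e₂)).elim
    | mark hx' e₁ e₂ => exact (hne (e₁.symm.trans e₂)).elim
    | bump hx h₁ => contradiction
  | const hx h₁ h₂ h₃ =>
    cases h' with
    | diamond _ hne => exact (hne (h₁.symm.trans h₂)).elim
    | const hy h _ _ => exact ⟨h₁.trans h.symm, by tauto⟩
    | mark _ _ _ k h => exact (ne_of_eq_add_single h (h₃.symm.trans h₁)).elim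
    | bump _ _ i k _ h => exact (ne_of_eq_add_single h (h₃.symm.trans h₁)).elim
  | mark hx h₁ h₂ k h₃ h₄ =>
    cases h' with
    | diamond _ hne => exact (hne (h₁.symm.trans h₂)).elim
    | const hy e₁ _ e₃ => exact (ne_of_eq_add_single h₃ (e₃.symm.trans e₁)).elim
    | mark hy e₁ => exact ⟨h₁.trans e₁.symm, by tauto⟩
    | bump hy e₁ i' k' h₂' h₃' h₄' =>
      exfalso
      have : k = k' := add_single_injective (h₃.symm.trans h₃')
      subst this
      have := congrFun h₂' i'
      rw [add_single_apply, if_pos rfl] at this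
      omega
  | bump hx h₁ i k h₂ h₃ h₄ =>
    cases h' with
    | diamond _ hne => contradiction
    | const hy e₁ _ e₃ => exact (ne_of_eq_add_single h₃ (e₃.symm.trans e₁)).elim
    | mark hy e₁ e₂ k' h₃' h₄' =>
      exfalso
      have : k = k' := add_single_injective (h₃.symm.trans h₃')
      subst this
      have := congrFun h₂ i
      rw [add_single_apply, if_pos rfl] at this
      omega
    | bump hy _ i' k' h₂' h₃' h₄' =>
      have : k = k' := add_single_injective (h₃.symm.trans h₃')
      subst this
      exact ⟨eq_of_sub_single h₂ h₂' (h₄.symm.trans h₄'), by tauto⟩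

/-- The number of nonzero parts follows the recursion of longest increasing subsequences. -/
theorem apply_ne_zero_iff (h : Growth x ρ μ ν κ) (m : ℕ) :
    κ.1 m ≠ 0 ↔ μ.1 m ≠ 0 ∨ ν.1 m ≠ 0 ∨ (x ∧ ∀ a < m, ρ.1 a ≠ 0) := by
  cases h with
  | diamond hx hne h₁ h₂ h₃ h₄ =>
    rw [eq_sup h₃ h₄ hne]
    simp only [Pi.sup_apply, hx, false_and, or_false]
    omega
  | const hx h₁ h₂ h₃ => subst h₁ h₂ h₃; simp [hx]
  | mark hx h₁ h₂ k h₃ h₄ =>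
    subst h₁ h₂
    rw [h₃, add_single_apply]
    simp only [hx, true_and]
    constructor
    · intro h
      split_ifs at h with hm
      · subst hm
        refine Or.inr (Or.inr fun a ha h0 => ?_)
        have := κ.2.1 ha.le
        rw [h₃, add_single_apply, add_single_apply, if_pos rfl, if_neg ha.ne] at this
        omega
      · exact Or.inl h
    · rintro (h | h | h)
      · omega
      · omega
      · split_ifs with hm
        · omega
        · rcases lt_or_gt_of_ne hm with hlt | hlt
          · have := κ.2.1 hlt.le
            rw [h₃, add_single_apply, add_single_apply, if_pos rfl, if_neg hlt.ne] at this
            omega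
          · exact absurd h₄ (h k hlt)
  | bump hx h₁ i k h₂ h₃ h₄ =>
    subst h₁
    have := congrFun h₂ i
    rw [add_single_apply, if_pos rfl] at this
    rw [h₃, add_single_apply]
    simp only [hx, false_and, or_false, or_self]
    split_ifs with hm
    · subst hm; omega
    · rfl

end Growth

end Shape

namespace Shape

section Boundary

variable {x : ℕ → Prop} {A B : ℕ → Shape} {m : ℕ}

theorem eq_iff_of_growth (h₀ : A 0 = B 0)
    (h : ∀ j < m, Growth (x j) (A j) (B j) (A (j + 1)) (B (j + 1))) :
    A m = B m ↔ ∀ j < m, ¬x j := by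
  induction m with
  | zero => simp [h₀]
  | succ m ih =>
    rw [(h m m.lt_succ_self).eq_iff, ih fun j hj => h j (by omega)]
    simp only [Nat.lt_succ_iff_lt_or_eq, or_imp, forall_and, forall_eq]

theorem weakCover_of_growth (h₀ : A 0 = B 0)
    (h : ∀ j < m, Growth (x j) (A j) (B j) (A (j + 1)) (B (j + 1))) :
    WeakCover (A m) (B m) := by
  cases m with
  | zero => exact Or.inl h₀.symm
  | succ m => exact (h m m.lt_succ_self).swap.weakCover_right

end Boundary

open Classical in
/-- The top right corner of a growth square, when it exists. -/
def forward (x : Prop) (ρ μ ν : Shape) : Shape :=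
  if h : ∃ κ, Growth x ρ μ ν κ then h.choose else 0

open Classical in
/-- The bottom left corner of a growth square, when it exists. -/
def backward (μ ν κ : Shape) : Shape :=
  if h : ∃ ρ x, Growth x ρ μ ν κ then h.choose else 0

/-- The growth diagram with markings `x` and zero lower boundary. -/
def grow (x : ℕ → ℕ → Prop) : ℕ → ℕ → Shape
  | 0, _ => 0
  | _ + 1, 0 => 0
  | i + 1, j + 1 => forward (x i j) (grow x i j) (grow x (i + 1) j) (grow x i (j + 1))
termination_by i j => (i, j)

/-- The growth diagram, in reversed coordinates, with upper boundary `p`, `q`. -/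
def ungrow (p q : ℕ → Shape) : ℕ → ℕ → Shape
  | 0, b => q b
  | a + 1, 0 => p (a + 1)
  | a + 1, b + 1 => backward (ungrow p q a (b + 1)) (ungrow p q (a + 1) b) (ungrow p q a b)
termination_by a b => (a, b)

theorem grow_zero_left (x : ℕ → ℕ → Prop) (j : ℕ) : grow x 0 j = 0 := by
  rw [grow]

theorem grow_zero_right (x : ℕ → ℕ → Prop) (i : ℕ) : grow x i 0 = 0 := by
  cases i <;> rw [grow]

theorem growth_grow {x : ℕ → ℕ → Prop} (hcol : ∀ i j j', x i j → x i j' → j = j')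
    (hrow : ∀ i i' j, x i j → x i' j → i = i') (i j : ℕ) :
    Growth (x i j) (grow x i j) (grow x (i + 1) j) (grow x i (j + 1))
      (grow x (i + 1) (j + 1)) := by
  induction i using Nat.strong_induction_on generalizing j with
  | _ i ihi =>
  induction j using Nat.strong_induction_on with
  | _ j ihj =>
  have hc₀ : grow x i 0 = grow x (i + 1) 0 := by rw [grow_zero_right, grow_zero_right]
  have hr₀ : grow x 0 j = grow x 0 (j + 1) := by rw [grow_zero_left, grow_zero_left]
  have hr := fun i' hi' => (ihi i' hi' j).swap
  have hex : ∃ κ, Growth (x i j) (grow x i j) (grow x (i + 1) j) (grow x i (j + 1)) κ := by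
    refine Growth.exists_forward
      (weakCover_of_growth (A := grow x i) (B := grow x (i + 1)) hc₀ ihj)
      (weakCover_of_growth (A := fun i => grow x i j) (B := fun i => grow x i (j + 1)) hr₀ hr)
      fun hx => ⟨?_, ?_⟩
    · exact (eq_iff_of_growth (A := grow x i) (B := grow x (i + 1)) hc₀ ihj).2
        fun j' hj' hx' => hj'.ne (hcol _ _ _ hx' hx)
    · exact (eq_iff_of_growth (A := fun i => grow x i j) (B := fun i => grow x i (j + 1)) hr₀ hr).2
        fun i' hi' hx' => hi'.ne (hrow _ _ _ hx' hx)
  have : grow x (i + 1) (j + 1) = hex.choose := by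
    rw [grow, forward, dif_pos hex]
  rw [this]
  exact hex.choose_spec

theorem growth_ungrow {p q : ℕ → Shape} (h₀ : p 0 = q 0) (hp : ∀ a, WeakCover (p (a + 1)) (p a))
    (hq : ∀ b, WeakCover (q (b + 1)) (q b)) (a b : ℕ) :
    WeakCover (ungrow p q a (b + 1)) (ungrow p q a b) ∧
      ∃ x, Growth x (ungrow p q (a + 1) (b + 1)) (ungrow p q a (b + 1)) (ungrow p q (a + 1) b)
        (ungrow p q a b) := by
  have step : ∀ {a b}, WeakCover (ungrow p q a (b + 1)) (ungrow p q a b) →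
      WeakCover (ungrow p q (a + 1) b) (ungrow p q a b) →
      ∃ x, Growth x (ungrow p q (a + 1) (b + 1)) (ungrow p q a (b + 1)) (ungrow p q (a + 1) b)
        (ungrow p q a b) := by
    intro a b h₁ h₂
    have hex := Growth.exists_backward h₁ h₂
    have : ungrow p q (a + 1) (b + 1) = hex.choose := by
      rw [ungrow, backward, dif_pos hex]
    rw [this]
    exact hex.choose_spec
  have col : ∀ a, (∀ b, WeakCover (ungrow p q a (b + 1)) (ungrow p q a b)) →
      ∀ b, WeakCover (ungrow p q (a + 1) b) (ungrow p q a b) := by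
    intro a h b
    induction b with
    | zero =>
      cases a with
      | zero => rw [ungrow, ungrow, ← h₀]; exact hp 0
      | succ a => rw [ungrow, ungrow]; exact hp (a + 1)
    | succ b ih =>
      obtain ⟨x, hx⟩ := step (h b) ih
      exact hx.weakCover_left
  have row : ∀ a b, WeakCover (ungrow p q a (b + 1)) (ungrow p q a b) := by
    intro a
    induction a with
    | zero => intro b; rw [ungrow, ungrow]; exact hq b
    | succ a ih =>
      intro b
      obtain ⟨x, hx⟩ := step (ih b) (col a ih b)
      exact hx.swap.weakCover_left
  exact ⟨row a b, step (row a b) (col a (row a) b)⟩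

theorem eq_zero_of_weakCover_zero {ρ : Shape} (h : WeakCover ρ 0) : ρ = 0 := by
  rcases h with h | ⟨i, hi⟩
  · exact h.symm
  · have := congrFun hi i
    rw [add_single_apply, if_pos rfl] at this
    exact absurd this (Nat.succ_ne_zero _).symm

/-- Saturated chains of length `n` starting at `0`, continued constantly. -/
structure IsPath (n : ℕ) (p : ℕ → Shape) : Prop where
  zero : p 0 = 0
  cover : ∀ i < n, Cover (p i) (p (i + 1))
  const : ∀ i, n ≤ i → p i = p n

/-- The cell `(i, j)` lies on the graph of `π`. -/
def Marked {n : ℕ} (π : Equiv.Perm (Fin n)) (i j : ℕ) : Prop :=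
  ∃ h : i < n, (π ⟨i, h⟩ : ℕ) = j

/-- `G` is the growth diagram of the permutation `π`. -/
structure IsDiagram {n : ℕ} (π : Equiv.Perm (Fin n)) (G : ℕ → ℕ → Shape) : Prop where
  zero_left : ∀ j, G 0 j = 0
  zero_right : ∀ i, G i 0 = 0
  growth : ∀ i < n, ∀ j < n,
    Growth (Marked π i j) (G i j) (G (i + 1) j) (G i (j + 1)) (G (i + 1) (j + 1))

variable {n : ℕ} {π π' : Equiv.Perm (Fin n)} {G G' : ℕ → ℕ → Shape}

theorem Marked.right_unique {i j j' : ℕ} (h : Marked π i j) (h' : Marked π i j') : j = j' := by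
  obtain ⟨hi, h⟩ := h
  obtain ⟨_, h'⟩ := h'
  exact h.symm.trans h'

theorem Marked.left_unique {i i' j : ℕ} (h : Marked π i j) (h' : Marked π i' j) : i = i' := by
  obtain ⟨hi, h⟩ := h
  obtain ⟨_, h'⟩ := h'
  simpa using π.injective (Fin.ext (h.trans h'.symm))

theorem marked_symm {i j : ℕ} : Marked π.symm i j ↔ Marked π j i := by
  constructor
  · rintro ⟨h, rfl⟩; exact ⟨Fin.is_lt _, by simp⟩
  · rintro ⟨h, rfl⟩; exact ⟨Fin.is_lt _, by simp⟩

theorem exists_isDiagram (π : Equiv.Perm (Fin n)) : ∃ G, IsDiagram π G :=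
  ⟨grow (Marked π), grow_zero_left _, grow_zero_right _, fun i _ j _ =>
    growth_grow (x := Marked π) (fun _ _ _ => Marked.right_unique)
      (fun _ _ _ => Marked.left_unique) i j⟩

namespace IsDiagram

theorem swap (h : IsDiagram π G) : IsDiagram π.symm fun i j => G j i :=
  ⟨h.zero_right, h.zero_left, fun i hi j hj => by
    rw [marked_symm]; exact (h.growth j hj i hi).swap⟩

theorem cover_top (h : IsDiagram π G) {i : ℕ} (hi : i < n) : Cover (G i n) (G (i + 1) n) := by
  have h₀ : G i 0 = G (i + 1) 0 := by rw [h.zero_right, h.zero_right]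
  refine (weakCover_of_growth (A := G i) (B := G (i + 1)) h₀ (h.growth i hi)).resolve_left
    fun he => ?_
  exact (eq_iff_of_growth (A := G i) (B := G (i + 1)) h₀ (h.growth i hi)).1 he.symm _
    (Fin.is_lt (π ⟨i, hi⟩)) ⟨hi, rfl⟩

theorem isPath_top (h : IsDiagram π G) : IsPath n fun i => G (min i n) n where
  zero := by simp [h.zero_left]
  cover i hi := by
    rw [min_eq_left hi.le, min_eq_left (Nat.succ_le_of_lt hi)]
    exact h.cover_top hi
  const i hi := by simp [hi]

theorem isPath_right (h : IsDiagram π G) : IsPath n fun j => G n (min j n) := h.swap.isPath_top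

theorem ext_boundary (h : IsDiagram π G) (h' : IsDiagram π' G')
    (htop : ∀ i ≤ n, G i n = G' i n) (hright : ∀ j ≤ n, G n j = G' n j) : π = π' := by
  have key : ∀ a ≤ n, ∀ b ≤ n, G (n - a) (n - b) = G' (n - a) (n - b) := by
    intro a
    induction a with
    | zero => intro _ b hb; exact hright _ (Nat.sub_le _ _)
    | succ a iha =>
      intro ha b
      induction b with
      | zero => intro _; exact htop _ (Nat.sub_le _ _)
      | succ b ihb =>
        intro hb
        have g := h.growth (n - (a + 1)) (by omega) (n - (b + 1)) (by omega)
        have g' := h'.growth (n - (a + 1)) (by omega) (n - (b + 1)) (by omega)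
        have e₁ : n - (a + 1) + 1 = n - a := by omega
        have e₂ : n - (b + 1) + 1 = n - b := by omega
        rw [e₁, e₂] at g g'
        rw [← iha (by omega) _ hb, ← iha (by omega) b (by omega), ← ihb (by omega)] at g'
        exact (g.unique_backward g').1
  have key' : ∀ i ≤ n, ∀ j ≤ n, G i j = G' i j := fun i hi j hj => by
    simpa [Nat.sub_sub_self hi, Nat.sub_sub_self hj] using
      key (n - i) (Nat.sub_le _ _) (n - j) (Nat.sub_le _ _)
  ext ⟨i, hi⟩
  have hj := Fin.is_lt (π ⟨i, hi⟩)
  have g := h.growth i hi _ hj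
  have g' := h'.growth i hi _ hj
  rw [← key' _ (by omega) _ (by omega), ← key' _ (by omega) _ (by omega),
    ← key' _ (by omega) _ (by omega), ← key' _ (by omega) _ (by omega)] at g'
  obtain ⟨_, he⟩ := (g.unique_backward g').2.1 ⟨hi, rfl⟩
  exact he.symm

end IsDiagram

theorem IsPath.weakCover_sub {p : ℕ → Shape} (hp : IsPath n p) (a : ℕ) :
    WeakCover (p (n - (a + 1))) (p (n - a)) := by
  rcases lt_or_ge a n with h | h
  · have := hp.cover (n - (a + 1)) (by omega)
    rw [show n - (a + 1) + 1 = n - a by omega] at this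
    exact Or.inr this
  · rw [show n - (a + 1) = n - a by omega]
    exact Or.inl rfl

theorem Cover.ne {μ κ : Shape} (h : Cover μ κ) : μ ≠ κ := by
  obtain ⟨i, hi⟩ := h
  exact (ne_of_eq_add_single hi).symm

theorem exists_isDiagram_of_isPath {p q : ℕ → Shape} (hp : IsPath n p) (hq : IsPath n q)
    (hpq : p n = q n) :
    ∃ (π : Equiv.Perm (Fin n)) (G : ℕ → ℕ → Shape), IsDiagram π G ∧ (∀ i ≤ n, G i n = p i) ∧
      ∀ j ≤ n, G n j = q j := by
  set H := ungrow (fun a => p (n - a)) (fun b => q (n - b)) with hH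
  have hgrow := fun a b => growth_ungrow (p := fun a => p (n - a)) (q := fun b => q (n - b))
    (by simpa using hpq) hp.weakCover_sub hq.weakCover_sub a b
  rw [← hH] at hgrow
  have hHtop : ∀ a, H a 0 = p (n - a) := by
    intro a
    cases a with
    | zero => rw [hH, ungrow]; exact hpq.symm
    | succ a => rw [hH, ungrow]
  have hHright : ∀ b, H 0 b = q (n - b) := by
    intro b
    rw [hH, ungrow]
  have hHn : ∀ b, H n b = 0 := by
    intro b
    induction b with
    | zero => rw [hHtop, Nat.sub_self, hp.zero]
    | succ b ih => exact eq_zero_of_weakCover_zero (ih ▸ (hgrow n b).1)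
  have hHn' : ∀ a, H a n = 0 := by
    intro a
    induction a with
    | zero => rw [hHright, Nat.sub_self, hq.zero]
    | succ a ih =>
      have hrow : ∀ b, WeakCover (H (a + 1) b) (H a b) := by
        intro b
        cases b with
        | zero => rw [hHtop, hHtop]; exact hp.weakCover_sub a
        | succ b => exact (hgrow a b).2.choose_spec.weakCover_left
      exact eq_zero_of_weakCover_zero (ih ▸ hrow n)
  set G : ℕ → ℕ → Shape := fun i j => H (n - i) (n - j) with hG
  have hG0 : ∀ j, G 0 j = 0 := fun j => hHn _
  have hG0' : ∀ i, G i 0 = 0 := fun i => hHn' _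
  have hgr : ∀ i j, ∃ x, i < n → j < n →
      Growth x (G i j) (G (i + 1) j) (G i (j + 1)) (G (i + 1) (j + 1)) := by
    intro i j
    obtain ⟨x, hx⟩ := (hgrow (n - (i + 1)) (n - (j + 1))).2
    refine ⟨x, fun hi hj => ?_⟩
    rw [show n - (i + 1) + 1 = n - i by omega, show n - (j + 1) + 1 = n - j by omega] at hx
    exact hx
  choose x hx using hgr
  have htop : ∀ i ≤ n, G i n = p i := by
    intro i hi
    simp only [hG, Nat.sub_self, hHtop, Nat.sub_sub_self hi]
  have hright : ∀ j ≤ n, G n j = q j := by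
    intro i hi
    simp only [hG, Nat.sub_self, hHright, Nat.sub_sub_self hi]
  have hcol : ∀ i < n, ∀ m ≤ n, G i m = G (i + 1) m ↔ ∀ j < m, ¬x i j := fun i hi m hm =>
    eq_iff_of_growth (A := G i) (B := G (i + 1)) (by rw [hG0', hG0'])
      fun j hj => hx i j hi (by omega)
  have hrow : ∀ j < n, ∀ m ≤ n, G m j = G m (j + 1) ↔ ∀ i < m, ¬x i j := fun j hj m hm =>
    eq_iff_of_growth (A := fun i => G i j) (B := fun i => G i (j + 1)) (by rw [hG0, hG0])
      fun i hi => (hx i j (by omega) hj).swap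
  have hcol_lt : ∀ i < n, ∀ j < n, x i j → ∀ j' < j, ¬x i j' := fun i hi j hj h =>
    (hcol i hi j hj.le).1 ((hx i j hi hj).eq_of_mark h)
  have hrow_lt : ∀ i < n, ∀ j < n, x i j → ∀ i' < i, ¬x i' j := fun i hi j hj h =>
    (hrow j hj i hi.le).1 ((hx i j hi hj).swap.eq_of_mark h)
  have hex : ∀ i : Fin n, ∃ j : Fin n, x i j := by
    intro i
    by_contra hne
    push Not at hne
    have := (hcol i i.2 n le_rfl).2 fun j hj => hne ⟨j, hj⟩
    rw [htop i i.2.le, htop (i + 1) i.2] at this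
    exact (hp.cover i i.2).ne this
  choose σ hσ using hex
  have hinj : Function.Injective σ := by
    intro i i' h
    rcases lt_trichotomy i i' with hlt | heq | hlt
    · exact absurd (h ▸ hσ i) (hrow_lt i' i'.2 _ (σ i').2 (hσ i') i hlt)
    · exact heq
    · exact absurd (h ▸ hσ i') (hrow_lt i i.2 _ (σ i).2 (hσ i) i' hlt)
  let π := Equiv.ofBijective σ (Finite.injective_iff_bijective.1 hinj)
  have hmark : ∀ i < n, ∀ j < n, x i j = Marked π i j := by
    intro i hi j hj
    refine propext ⟨fun h => ⟨hi, ?_⟩, ?_⟩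
    · have h' := hσ ⟨i, hi⟩
      rcases lt_trichotomy (σ ⟨i, hi⟩ : ℕ) j with hlt | heq | hlt
      · exact absurd h' (hcol_lt i hi j hj h _ hlt)
      · exact heq
      · exact absurd h (hcol_lt i hi _ (Fin.is_lt _) h' _ hlt)
    · rintro ⟨_, rfl⟩
      exact hσ ⟨i, hi⟩
  exact ⟨π, G, ⟨hG0, hG0', fun i hi j hj => hmark i hi j hj ▸ hx i j hi hj⟩, htop, hright⟩

/-- `π` has an increasing subsequence of length `k` with positions below `i`, values below `j`. -/
def HasIncreasing (π : Equiv.Perm (Fin n)) (k i j : ℕ) : Prop :=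
  ∃ f : Fin k → Fin n, StrictMono f ∧ StrictMono (fun a => π (f a)) ∧
    ∀ a, (f a : ℕ) < i ∧ (π (f a) : ℕ) < j

theorem HasIncreasing.mono {k k' i i' j j' : ℕ} (h : HasIncreasing π k i j) (hk : k' ≤ k)
    (hi : i ≤ i') (hj : j ≤ j') : HasIncreasing π k' i' j' := by
  obtain ⟨f, hf, hf', hb⟩ := h
  exact ⟨fun a => f (Fin.castLE hk a), fun a b hab => hf hab, fun a b hab => hf' hab,
    fun a => ⟨(hb _).1.trans_le hi, (hb _).2.trans_le hj⟩⟩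

theorem hasIncreasing_succ {k i j : ℕ} :
    HasIncreasing π (k + 1) (i + 1) (j + 1) ↔ HasIncreasing π (k + 1) (i + 1) j ∨
      HasIncreasing π (k + 1) i (j + 1) ∨ (Marked π i j ∧ HasIncreasing π k i j) := by
  constructor
  · rintro ⟨f, hf, hf', hb⟩
    have hle : ∀ a, f a ≤ f (Fin.last k) := fun a => hf.monotone (Fin.le_last a)
    have hle' : ∀ a, π (f a) ≤ π (f (Fin.last k)) := fun a => hf'.monotone (Fin.le_last a)
    have hbl := hb (Fin.last k)
    by_cases h₂ : (π (f (Fin.last k)) : ℕ) < j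
    · exact Or.inl ⟨f, hf, hf', fun a => ⟨(hb a).1, lt_of_le_of_lt (hle' a) h₂⟩⟩
    by_cases h₁ : (f (Fin.last k) : ℕ) < i
    · exact Or.inr (Or.inl ⟨f, hf, hf', fun a => ⟨lt_of_le_of_lt (hle a) h₁, (hb a).2⟩⟩)
    have e₁ : (f (Fin.last k) : ℕ) = i := by omega
    have e₂ : (π (f (Fin.last k)) : ℕ) = j := by omega
    refine Or.inr (Or.inr ⟨⟨e₁ ▸ Fin.is_lt _, ?_⟩, fun a => f a.castSucc,
      fun a b hab => hf hab, fun a b hab => hf' hab, fun a => ⟨?_, ?_⟩⟩)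
    · subst e₁; exact e₂
    · rw [← e₁]; exact hf (Fin.castSucc_lt_last a)
    · rw [← e₂]; exact hf' (Fin.castSucc_lt_last a)
  · rintro (h | h | ⟨⟨hi, rfl⟩, f, hf, hf', hb⟩)
    · exact h.mono le_rfl le_rfl (Nat.le_succ _)
    · exact h.mono le_rfl (Nat.le_succ _) le_rfl
    · refine ⟨Fin.snoc f ⟨i, hi⟩, ?_, ?_, ?_⟩
      · intro a b hab
        induction b using Fin.lastCases with
        | last =>
          induction a using Fin.lastCases with
          | last => exact absurd hab (lt_irrefl _)
          | cast a => simpa using Fin.lt_def.2 (hb a).1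
        | cast b =>
          induction a using Fin.lastCases with
          | last => exact absurd hab (Fin.castSucc_lt_last b).asymm
          | cast a => simpa using hf hab
      · intro a b hab
        induction b using Fin.lastCases with
        | last =>
          induction a using Fin.lastCases with
          | last => exact absurd hab (lt_irrefl _)
          | cast a => simpa using Fin.lt_def.2 (hb a).2
        | cast b =>
          induction a using Fin.lastCases with
          | last => exact absurd hab (Fin.castSucc_lt_last b).asymm
          | cast a => simpa using hf' hab
      · intro a
        induction a using Fin.lastCases with
        | last => simp
        | cast a =>
          simp only [Fin.snoc_castSucc]
          have := hb a
          omega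

theorem IsDiagram.apply_ne_zero_iff (h : IsDiagram π G) {i j : ℕ} (hi : i ≤ n) (hj : j ≤ n)
    (m : ℕ) : (G i j).1 m ≠ 0 ↔ HasIncreasing π (m + 1) i j := by
  induction i generalizing j m with
  | zero =>
    rw [h.zero_left]
    refine ⟨fun h => (h rfl).elim, ?_⟩
    rintro ⟨f, -, -, hb⟩
    exact absurd (hb 0).1 (Nat.not_lt_zero _)
  | succ i ihi =>
    induction j generalizing m with
    | zero =>
      rw [h.zero_right]
      refine ⟨fun h => (h rfl).elim, ?_⟩
      rintro ⟨f, -, -, hb⟩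
      exact absurd (hb 0).2 (Nat.not_lt_zero _)
    | succ j ihj =>
      rw [(h.growth i hi j hj).apply_ne_zero_iff, ihj (by omega), ihi (by omega) hj,
        hasIncreasing_succ]
      have : (∀ a < m, (G i j).1 a ≠ 0) ↔ HasIncreasing π m i j := by
        cases m with
        | zero =>
          simp only [Nat.not_lt_zero, false_imp_iff, implies_true, true_iff]
          exact ⟨Fin.elim0, fun a => a.elim0, fun a => a.elim0, fun a => a.elim0⟩
        | succ m =>
          refine ⟨fun h => (ihi (by omega) (by omega) m).1 (h m m.lt_succ_self), fun h a ha => ?_⟩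
          exact (ihi (by omega) (by omega) a).2 (h.mono ha le_rfl le_rfl)
      rw [this]

theorem lisLE_iff (h : IsDiagram π G) (l : ℕ) : lisLE π l ↔ (G n n).1 l = 0 := by
  rw [← not_iff_not, ← ne_eq, h.apply_ne_zero_iff le_rfl le_rfl, lisLE]
  push Not
  constructor
  · rintro ⟨k, f, hf, hf', hk⟩
    exact HasIncreasing.mono (k := k) ⟨f, hf, hf', fun a => ⟨Fin.is_lt _, Fin.is_lt _⟩⟩ hk
      le_rfl le_rfl
  · rintro ⟨f, hf, hf', -⟩
    exact ⟨l + 1, f, hf, hf', l.lt_succ_self⟩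

/-- The Robinson–Schensted correspondence, restricted by the longest increasing subsequence. -/
theorem permCount_eq_card_path_pairs (n l : ℕ) :
    permCount n l = Nat.card {pq : (ℕ → Shape) × (ℕ → Shape) //
      IsPath n pq.1 ∧ IsPath n pq.2 ∧ pq.1 n = pq.2 n ∧ (pq.1 n).1 l = 0} := by
  choose G hG using fun π : Equiv.Perm (Fin n) => exists_isDiagram π
  refine Nat.card_congr (Equiv.ofBijective (fun π => ⟨(fun i => G π.1 (min i n) n,
    fun j => G π.1 n (min j n)), (hG π.1).isPath_top, (hG π.1).isPath_right, by simp,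
    by simpa using (lisLE_iff (hG π.1) l).1 π.2⟩) ⟨?_, ?_⟩)
  · intro π π' h
    simp only [Subtype.mk.injEq, Prod.mk.injEq] at h
    refine Subtype.ext ((hG π.1).ext_boundary (hG π'.1) (fun i hi => ?_) fun j hj => ?_)
    · simpa [hi] using congrFun h.1 i
    · simpa [hj] using congrFun h.2 j
  · rintro ⟨⟨p, q⟩, hp, hq, hpq, hl⟩
    obtain ⟨π, G', hG', htop, hright⟩ := exists_isDiagram_of_isPath hp hq hpq
    have heq : ∀ i ≤ n, ∀ j ≤ n, G π i j = G' i j := by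
      intro i
      induction i with
      | zero => intro _ j _; rw [(hG π).zero_left, hG'.zero_left]
      | succ i ihi =>
        intro hi j
        induction j with
        | zero => intro _; rw [(hG π).zero_right, hG'.zero_right]
        | succ j ihj =>
          intro hj
          have g := (hG π).growth i hi j hj
          rw [ihi (by omega) j (by omega), ihi (by omega) _ hj, ihj (by omega)] at g
          exact g.unique_forward (hG'.growth i hi j hj)
    refine ⟨⟨π, (lisLE_iff hG' l).2 (by rw [htop n le_rfl]; exact hl)⟩, ?_⟩
    refine Subtype.ext (Prod.ext (funext fun i => ?_) (funext fun j => ?_))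
    · dsimp only
      rw [heq _ (min_le_right _ _) _ le_rfl, htop _ (min_le_right _ _)]
      rcases le_total i n with h | h
      · rw [min_eq_left h]
      · rw [min_eq_right h]; exact (hp.const i h).symm
    · dsimp only
      rw [heq _ le_rfl _ (min_le_right _ _), hright _ (min_le_right _ _)]
      rcases le_total j n with h | h
      · rw [min_eq_left h]
      · rw [min_eq_right h]; exact (hq.const j h).symm

end Shape

namespace Shape

variable {l : ℕ}

/-- Extension of a tuple by zeros. -/
def extend (c : Fin l → ℕ) (k : ℕ) : ℕ := if h : k < l then c ⟨k, h⟩ else 0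

@[simp] theorem extend_val (c : Fin l → ℕ) (i : Fin l) : extend c i = c i := by
  simp [extend]

theorem extend_of_le (c : Fin l → ℕ) {k : ℕ} (h : l ≤ k) : extend c k = 0 := by
  simp [extend, h]

theorem extend_injective : Function.Injective (extend (l := l)) := fun c d h =>
  funext fun i => by rw [← extend_val c, h, extend_val]

theorem antitone_extend {c : Fin l → ℕ} (hc : Antitone c) : Antitone (extend c) := by
  intro a b hab
  unfold extend
  split_ifs with h₁ h₂
  · exact hc (Fin.mk_le_mk.2 hab)
  · omega
  · exact Nat.zero_le _
  · exact le_rfl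

theorem antitone_of_extend {c : Fin l → ℕ} (hc : Antitone (extend c)) : Antitone c := by
  intro a b hab
  rw [← extend_val c, ← extend_val c]
  exact hc hab

theorem extend_sub_add_single {c : Fin l → ℕ} {i : Fin l} (hi : 0 < c i) :
    extend c = extend (c - Pi.single i 1) + Pi.single (i : ℕ) 1 := by
  funext k
  rw [add_single_apply]
  by_cases hk : k < l
  · have h₁ := extend_val c ⟨k, hk⟩
    have h₂ := extend_val (c - Pi.single i 1) ⟨k, hk⟩
    simp only [Pi.sub_apply, Pi.single_apply] at h₁ h₂
    rw [h₁, h₂]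
    by_cases hki : k = i
    · subst hki; simp only [Fin.eta, if_true]; omega
    · simp [hki, Fin.ext_iff]
  · rw [extend_of_le _ (not_lt.1 hk), extend_of_le _ (not_lt.1 hk), if_neg (by omega)]

/-- The shape whose parts are the entries of an antitone tuple. -/
def ofTuple (c : Fin l → ℕ) (hc : Antitone c) : Shape :=
  ⟨extend c, antitone_extend hc, l, extend_of_le c le_rfl⟩

/-- Paths of length `n` ending in the shape with parts `c`. -/
abbrev PathTo (n : ℕ) (c : Fin l → ℕ) := {p : ℕ → Shape // IsPath n p ∧ (p n).1 = extend c}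

theorem PathTo.antitone {n : ℕ} {c : Fin l → ℕ} (p : PathTo n c) : Antitone c :=
  antitone_of_extend (p.2.2 ▸ (p.1 n).2.1)

theorem PathTo.ext_le {n : ℕ} {c : Fin l → ℕ} {p q : PathTo n c} (h : ∀ i ≤ n, p.1 i = q.1 i) :
    p = q := by
  refine Subtype.ext (funext fun i => ?_)
  rcases le_total i n with hi | hi
  · exact h i hi
  · rw [p.2.1.const i hi, q.2.1.const i hi, h n le_rfl]

/-- Appending a cell in row `i` to a path. -/
def PathTo.append {n : ℕ} {c : Fin l → ℕ} (hc : Antitone c)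
    (s : Σ i : {i : Fin l // 0 < c i}, PathTo n (c - Pi.single i.1 1)) : PathTo (n + 1) c :=
  ⟨fun m => if m ≤ n then s.2.1 m else ofTuple c hc, by
    obtain ⟨⟨i, hi⟩, p, hp, hpn⟩ := s
    refine ⟨⟨by simpa using hp.zero, fun m hm => ?_, fun m hm => ?_⟩, by simp [ofTuple]⟩
    · rcases Nat.lt_succ_iff_lt_or_eq.1 hm with h | rfl
      · simpa [h.le, Nat.succ_le_of_lt h] using hp.cover m h
      · refine ⟨i, ?_⟩
        simp only [le_refl, if_true, ofTuple, Nat.not_succ_le_self, if_false, hpn]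
        exact extend_sub_add_single hi
    · simp [Nat.not_le.2 hm]⟩

theorem PathTo.append_bijective {n : ℕ} {c : Fin l → ℕ} (hc : Antitone c) :
    Function.Bijective (PathTo.append (n := n) hc) := by
  constructor
  · rintro ⟨⟨i, hi⟩, p⟩ ⟨⟨i', hi'⟩, p'⟩ h
    have h' : ∀ m ≤ n, p.1 m = p'.1 m := fun m hm => by
      simpa [append, hm] using congrFun (congrArg Subtype.val h) m
    obtain rfl : i = i' := by
      have e := congrArg Subtype.val (h' n le_rfl)
      rw [p.2.2, p'.2.2] at e
      have := congrFun (extend_injective e) i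
      by_contra hne
      simp [hne] at this
      omega
    rw [PathTo.ext_le h']
  · intro p
    obtain ⟨k, hk⟩ := p.2.1.cover n n.lt_succ_self
    rw [p.2.2] at hk
    have hkl : k < l := by
      by_contra h
      have := congrFun hk k
      rw [add_single_apply, if_pos rfl, extend_of_le _ (not_lt.1 h)] at this
      omega
    have hck : 0 < c ⟨k, hkl⟩ := by
      have := congrFun hk k
      rw [add_single_apply, if_pos rfl] at this
      rw [← extend_val c ⟨k, hkl⟩]
      dsimp only
      omega
    have hpn : (p.1 n).1 = extend (c - Pi.single ⟨k, hkl⟩ 1) :=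
      add_right_cancel (hk.symm.trans (extend_sub_add_single hck))
    refine ⟨⟨⟨⟨k, hkl⟩, hck⟩, fun m => p.1 (min m n), ⟨by simpa using p.2.1.zero, fun m hm => ?_,
      fun m hm => by simp [hm]⟩, by simpa using hpn⟩, PathTo.ext_le fun m hm => ?_⟩
    · rw [min_eq_left hm.le, min_eq_left (Nat.succ_le_of_lt hm)]
      exact p.2.1.cover m (by omega)
    · rcases Nat.le_succ_iff.1 hm with h | rfl
      · simp [append, h]
      · exact Subtype.ext (by simp [append, ofTuple, p.2.2])

instance finite_pathTo (n : ℕ) (c : Fin l → ℕ) : Finite (PathTo n c) := by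
  induction n generalizing c with
  | zero =>
    have : Subsingleton (PathTo 0 c) := ⟨fun p q => PathTo.ext_le fun i hi => by
      rw [Nat.le_zero.1 hi, p.2.1.zero, q.2.1.zero]⟩
    infer_instance
  | succ n ih =>
    by_cases hc : Antitone c
    · exact Finite.of_surjective _ (PathTo.append_bijective hc).2
    · have : IsEmpty (PathTo (n + 1) c) := ⟨fun p => hc p.antitone⟩
      infer_instance

theorem card_pathTo_of_not_antitone {n : ℕ} {c : Fin l → ℕ} (hc : ¬Antitone c) :
    Nat.card (PathTo n c) = 0 := by
  have : IsEmpty (PathTo n c) := ⟨fun p => hc p.antitone⟩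
  exact Nat.card_of_isEmpty

theorem card_pathTo_zero : Nat.card (PathTo 0 (0 : Fin l → ℕ)) = 1 := by
  have : Subsingleton (PathTo 0 (0 : Fin l → ℕ)) := ⟨fun p q => PathTo.ext_le fun i hi => by
    rw [Nat.le_zero.1 hi, p.2.1.zero, q.2.1.zero]⟩
  have : Nonempty (PathTo 0 (0 : Fin l → ℕ)) :=
    ⟨⟨fun _ => 0, ⟨rfl, fun i hi => (Nat.not_lt_zero i hi).elim, fun _ _ => rfl⟩,
      funext fun k => by unfold extend; split_ifs <;> rfl⟩⟩
  exact Nat.card_unique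

theorem card_pathTo_succ {n : ℕ} {c : Fin l → ℕ} (hc : Antitone c) :
    Nat.card (PathTo (n + 1) c) =
      ∑ i, if 0 < c i then Nat.card (PathTo n (c - Pi.single i 1)) else 0 := by
  rw [← Nat.card_congr (Equiv.ofBijective _ (PathTo.append_bijective hc)), Nat.card_sigma,
    ← Finset.sum_filter, Finset.sum_subtype (p := fun i => 0 < c i)]
  simp

theorem IsPath.sum_eq {n : ℕ} {p : ℕ → Shape} (hp : IsPath n p) {i : ℕ} (hi : i ≤ n)
    (hl : (p i).1 l = 0) : ∑ k : Fin l, (p i).1 k = i := by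
  induction i with
  | zero => simp [hp.zero, show (0 : Shape).1 = 0 from rfl]
  | succ i ih =>
    obtain ⟨k, hk⟩ := hp.cover i hi
    have hkl : k < l := by
      by_contra h
      have := (p (i + 1)).2.1 (not_lt.1 h)
      rw [hl, hk, add_single_apply, if_pos rfl] at this
      omega
    have hl' : (p i).1 l = 0 := by
      rw [hk, add_single_apply] at hl
      omega
    have := ih (by omega) hl'
    simp only [hk, add_single_apply, Finset.sum_add_distrib, this]
    rw [Finset.sum_eq_single (⟨k, hkl⟩ : Fin l)]
    · simp
    · intro b _ hb
      rw [if_neg]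
      rintro rfl
      exact hb rfl
    · simp

theorem permCount_eq_sum_sq (n l : ℕ) :
    permCount n l = ∑ c ∈ Finset.Nat.antidiagonalTuple l n, Nat.card (PathTo n c) ^ 2 := by
  rw [permCount_eq_card_path_pairs]
  have e : {pq : (ℕ → Shape) × (ℕ → Shape) //
      IsPath n pq.1 ∧ IsPath n pq.2 ∧ pq.1 n = pq.2 n ∧ (pq.1 n).1 l = 0} ≃
      Σ c : Finset.Nat.antidiagonalTuple l n, PathTo n c.1 × PathTo n c.1 := by
    refine (Equiv.ofBijective (fun s => ⟨(s.2.1.1, s.2.2.1), s.2.1.2.1, s.2.2.2.1,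
      Subtype.ext (s.2.1.2.2.trans s.2.2.2.2.symm),
      (congrFun s.2.1.2.2 l).trans (extend_of_le _ le_rfl)⟩) ⟨?_, ?_⟩).symm
    · rintro ⟨⟨c, hc⟩, p, q⟩ ⟨⟨c', hc'⟩, p', q'⟩ h
      simp only [Subtype.mk.injEq, Prod.mk.injEq] at h
      obtain rfl : c = c' := extend_injective (by rw [← p.2.2, ← p'.2.2, h.1])
      rw [Subtype.ext h.1, Subtype.ext h.2]
    · rintro ⟨⟨p, q⟩, hp, hq, hpq, hl⟩
      dsimp only at hp hq hpq hl
      have hext : (p n).1 = extend fun k : Fin l => (p n).1 k := by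
        funext k
        unfold extend
        split_ifs with h
        · rfl
        · have := (p n).2.1 (not_lt.1 h)
          omega
      exact ⟨⟨⟨fun k => (p n).1 k, Finset.Nat.mem_antidiagonalTuple.2 (hp.sum_eq le_rfl hl)⟩,
        ⟨p, hp, hext⟩, ⟨q, hq, hpq ▸ hext⟩⟩, rfl⟩
  rw [Nat.card_congr e, Nat.card_sigma, Finset.sum_coe_sort _ fun c => Nat.card (PathTo n c × PathTo n c)]
  exact Finset.sum_congr rfl fun c _ => by rw [Nat.card_prod, sq]

end Shape

/-- `t ^ a / a!`, read as `0` for negative `a`. -/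
def divPow (t : ℝ) (a : ℤ) : ℝ := if 0 ≤ a then t ^ a.toNat / (a.toNat.factorial : ℝ) else 0

theorem divPow_of_neg (t : ℝ) {a : ℤ} (ha : a < 0) : divPow t a = 0 := if_neg (not_le.2 ha)

theorem divPow_natCast (t : ℝ) (k : ℕ) : divPow t k = t ^ k / (k.factorial : ℝ) := by
  simp [divPow]

theorem mul_divPow (t : ℝ) (a : ℤ) : a * divPow t a = t * divPow t (a - 1) := by
  rcases lt_trichotomy a 0 with h | rfl | h
  · rw [divPow_of_neg t h, divPow_of_neg t (by omega)]; simp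
  · rw [divPow_of_neg t (show (0 : ℤ) - 1 < 0 by omega)]; simp
  · obtain ⟨k, rfl⟩ : ∃ k : ℕ, a = (k + 1 : ℕ) := ⟨(a - 1).toNat, by omega⟩
    rw [show ((k + 1 : ℕ) : ℤ) - 1 = (k : ℕ) by push_cast; ring, divPow_natCast, divPow_natCast,
      Nat.factorial_succ]
    have := Nat.factorial_ne_zero k
    push_cast
    field_simp
    ring

/-- The determinant counting standard tableaux with shifted row lengths `m`. -/
def divPowDet {l : ℕ} (t : ℝ) (m : Fin l → ℤ) : ℝ :=
  Matrix.det (Matrix.of fun i j : Fin l => divPow t (m i + (j : ℕ)))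

namespace divPowDet

variable {l : ℕ} {t : ℝ}

theorem sum_mul (t : ℝ) (m : Fin l → ℤ) :
    t * ∑ i, divPowDet t (m - Pi.single i 1) =
      ((∑ i, (m i + (i : ℕ)) : ℤ) : ℝ) * divPowDet t m := by
  have hdet : ∀ m : Fin l → ℤ, divPowDet t m = ∑ σ : Equiv.Perm (Fin l),
      ((Equiv.Perm.sign σ : ℤ) : ℝ) * ∏ i, divPow t (m i + (σ i : ℕ)) := fun m => by
    rw [divPowDet, ← Matrix.det_transpose, Matrix.det_apply']
    rfl
  simp only [hdet, Finset.mul_sum]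
  rw [Finset.sum_comm]
  refine Finset.sum_congr rfl fun σ _ => ?_
  have hsum : ∑ i, (m i + (i : ℕ)) = ∑ i, (m i + (σ i : ℕ)) := by
    rw [Finset.sum_add_distrib, Finset.sum_add_distrib,
      Equiv.sum_comp σ fun i => ((i : ℕ) : ℤ)]
  rw [hsum, Int.cast_sum, Finset.sum_mul]
  refine Finset.sum_congr rfl fun i _ => ?_
  rw [← Finset.mul_prod_erase _ _ (Finset.mem_univ i),
    ← Finset.mul_prod_erase (a := i) _ (fun i => divPow t (m i + (σ i : ℕ))) (Finset.mem_univ i)]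
  have hprod : ∏ x ∈ Finset.univ.erase i, divPow t ((m - Pi.single i 1 : Fin l → ℤ) x + (σ x : ℕ)) =
      ∏ x ∈ Finset.univ.erase i, divPow t (m x + (σ x : ℕ)) :=
    Finset.prod_congr rfl fun x hx => by simp [Finset.ne_of_mem_erase hx]
  have h := mul_divPow t (m i + (σ i : ℕ))
  rw [hprod, Pi.sub_apply, Pi.single_eq_same, sub_add_eq_add_sub]
  linear_combination (-((Equiv.Perm.sign σ : ℤ) : ℝ) *
    ∏ x ∈ Finset.univ.erase i, divPow t (m x + (σ x : ℕ))) * h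

theorem eq_zero_of_eq {m : Fin l → ℤ} {i j : Fin l} (hij : i ≠ j) (h : m i = m j) :
    divPowDet t m = 0 :=
  Matrix.det_zero_of_row_eq hij (funext fun k => by simp [h])

theorem eq_zero_of_add_lt {m : Fin l → ℤ} {i : Fin l} (h : m i + l ≤ 0) :
    divPowDet t m = 0 :=
  Matrix.det_eq_zero_of_row_eq_zero i fun j => divPow_of_neg t (by have := j.2; omega)

theorem neg_id : divPowDet t (fun i : Fin l => -((i : ℕ) : ℤ)) = 1 := by
  rw [divPowDet, Matrix.det_of_isUpperTriangular]
  · simp [divPow]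
  · intro i j hij
    refine divPow_of_neg t ?_
    have : (j : ℕ) < i := hij
    omega

theorem card_pathTo_mul (t : ℝ) {n : ℕ} {c : Fin l → ℕ} (hc : Antitone c)
    (hn : ∑ i, c i = n) : (Nat.card (Shape.PathTo n c) : ℝ) * t ^ n =
      n.factorial * divPowDet t fun i => (c i : ℤ) - (i : ℕ) := by
  induction n generalizing c with
  | zero =>
    obtain rfl : c = 0 := funext fun i => by simpa using (Finset.sum_eq_zero_iff.1 hn) i
    have := neg_id (l := l) (t := t)
    simp_all [Shape.card_pathTo_zero]
  | succ n ih =>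
    have hsum := sum_mul t fun i => (c i : ℤ) - (i : ℕ)
    have hn' : (∑ i, ((c i : ℤ) - (i : ℕ) + (i : ℕ)) : ℤ) = (n + 1 : ℕ) := by
      rw [← hn]; push_cast; simp
    rw [hn'] at hsum
    rw [Nat.factorial_succ, Nat.cast_mul, mul_assoc, mul_left_comm]
    rw [Int.cast_natCast] at hsum
    rw [← hsum, Shape.card_pathTo_succ hc, Nat.cast_sum, Finset.sum_mul, Finset.mul_sum,
      Finset.mul_sum]
    refine Finset.sum_congr rfl fun i _ => ?_
    by_cases hA : ∃ j, i < j ∧ (j : ℕ) = i + 1 ∧ c j = c i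
    · obtain ⟨j, hij, hj, hcj⟩ := hA
      rw [eq_zero_of_eq (i := i) (j := j) hij.ne
        (by simp [hij.ne', hj, hcj]; ring)]
      have hna : ¬(0 < c i ∧ Antitone (c - Pi.single i 1)) := by
        rintro ⟨hpos, hanti⟩
        have := hanti hij.le
        simp [hij.ne', hcj] at this
        omega
      split_ifs with hpos
      · rw [Shape.card_pathTo_of_not_antitone fun h => hna ⟨hpos, h⟩]; simp
      · simp
    · have hlt : ∀ j, i < j → c j < c i := by
        intro j hij
        have hil : (i : ℕ) + 1 < l := by have := j.2; have : (i : ℕ) < j := hij; omega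
        have h₁ : c j ≤ c ⟨i + 1, hil⟩ := hc (Fin.mk_le_of_le_val hij)
        have h₂ : c ⟨i + 1, hil⟩ ≤ c i := hc (Fin.le_def.2 (Nat.le_succ _))
        have h₃ : c ⟨i + 1, hil⟩ ≠ c i := fun h =>
          hA ⟨_, Fin.lt_def.2 (Nat.lt_succ_self _), rfl, h⟩
        omega
      split_ifs with hpos
      · have hanti : Antitone (c - Pi.single i 1) := by
          intro a b hab
          have := hc hab
          simp only [Pi.sub_apply, Pi.single_apply]
          rcases eq_or_lt_of_le hab with rfl | hab'
          · exact le_rfl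
          · split_ifs with h₁ h₂ h₂
            · omega
            · omega
            · subst h₂; have := hlt b hab'; omega
            · omega
        have hs : ∑ k, (c - Pi.single i 1 : Fin l → ℕ) k = n := by
          have : ∑ k, ((c - Pi.single i 1 : Fin l → ℕ) k + Pi.single (M := fun _ => ℕ) i 1 k) = ∑ k, c k :=
            Finset.sum_congr rfl fun k _ => by
              simp only [Pi.sub_apply, Pi.single_apply]
              split_ifs with h
              · subst h; omega
              · rfl
          rw [Finset.sum_add_distrib, hn] at this
          simp at this ⊢
          exact this
        have heq : (fun k => (((c - Pi.single i 1 : Fin l → ℕ) k : ℕ) : ℤ) - (k : ℕ)) =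
            (fun k => (c k : ℤ) - (k : ℕ)) - Pi.single i 1 := by
          funext k
          simp only [Pi.sub_apply, Pi.single_apply]
          split_ifs with h
          · subst h; omega
          · simp
        have := ih hanti hs
        rw [heq] at this
        rw [pow_succ, ← mul_assoc, this]
        ring
      · rw [eq_zero_of_add_lt (i := i)]
        · simp
        · have : (i : ℕ) + 1 = l := by
            by_contra h
            have := hlt ⟨i + 1, by have := i.2; omega⟩ (Fin.lt_def.2 (Nat.lt_succ_self _))
            omega
          simp
          omega

end divPowDet

theorem permCount_mul_div (n l : ℕ) (t : ℝ) :
    (permCount n l : ℝ) * t ^ (2 * n) / ((n.factorial : ℝ) * (n.factorial : ℝ)) =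
      ∑ c ∈ Finset.Nat.antidiagonalTuple l n,
        (if Antitone c then divPowDet t (fun i => (c i : ℤ) - (i : ℕ)) ^ 2 else 0) := by
  rw [Shape.permCount_eq_sum_sq, Nat.cast_sum, Finset.sum_mul, Finset.sum_div]
  refine Finset.sum_congr rfl fun c hc => ?_
  have hn := Nat.factorial_ne_zero n
  split_ifs with h
  · have := divPowDet.card_pathTo_mul t h (Finset.Nat.mem_antidiagonalTuple.1 hc)
    rw [Nat.cast_pow, mul_comm 2 n, pow_mul, ← mul_pow, this]
    field_simp
  · rw [Shape.card_pathTo_of_not_antitone h]; simp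

section CauchyBinet

variable {l : ℕ}

theorem StrictAnti.add_sub_le_apply {f : Fin l → ℕ} (hf : StrictAnti f) {i j : Fin l}
    (hij : i ≤ j) : f j + ((j : ℕ) - i) ≤ f i := by
  obtain ⟨j, hj⟩ := j
  obtain ⟨d, rfl⟩ := Nat.exists_eq_add_of_le (Fin.le_def.1 hij)
  dsimp only at hj ⊢
  clear hij
  induction d with
  | zero => simp
  | succ d ih =>
    have h₁ := ih (by omega)
    have h₂ : f ⟨i + (d + 1), hj⟩ < f ⟨i + d, by omega⟩ :=
      hf (Fin.mk_lt_mk.2 (Nat.lt_succ_self _))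
    omega

/-- Every injective tuple is uniquely a strictly antitone tuple composed with a permutation. -/
theorem sum_injective_eq_sum_strictAnti (M : ℕ) (h : (Fin l → ℕ) → ℝ)
    (hh : ∀ f, ¬Function.Injective f → h f = 0) :
    ∑ f ∈ Fintype.piFinset fun _ : Fin l => Finset.range M, h f =
      ∑ f ∈ Fintype.piFinset fun _ : Fin l => Finset.range M,
        open Classical in if StrictAnti f then ∑ τ : Equiv.Perm (Fin l), h (f ∘ τ) else 0 := by
  classical
  rw [← Finset.sum_filter, ← Finset.sum_product',
    ← Finset.sum_filter_of_ne (p := Function.Injective) fun f _ hf =>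
      not_imp_comm.1 (hh f) hf]
  symm
  refine Finset.sum_bij (fun s _ => s.1 ∘ s.2) ?_ ?_ ?_ fun _ _ => rfl
  · rintro ⟨s, τ⟩ hs
    simp only [Finset.mem_product, Finset.mem_filter, Fintype.mem_piFinset, Finset.mem_range,
      Finset.mem_univ, and_true, Function.comp_apply] at hs ⊢
    exact ⟨fun i => hs.1 _, hs.2.injective.comp τ.injective⟩
  · rintro ⟨s, τ⟩ hs ⟨s', τ'⟩ hs' heq
    simp only [Finset.mem_product, Finset.mem_filter, Finset.mem_univ, and_true] at hs hs' heq
    have hrange : Set.range s = Set.range s' := by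
      rw [← τ.surjective.range_comp s, heq, τ'.surjective.range_comp s']
    have hss : s = s' := by
      have := (StrictMono.range_inj hs.2.dual_right hs'.2.dual_right).1
        (by rw [Set.range_comp, Set.range_comp, hrange])
      funext i
      exact congrFun this i
    subst hss
    have : τ = τ' := Equiv.ext fun i => hs.2.injective (congrFun heq i)
    rw [this]
  · intro f hf
    simp only [Finset.mem_filter, Fintype.mem_piFinset, Finset.mem_range] at hf
    have hsort := Tuple.monotone_sort (OrderDual.toDual ∘ f)
    set τ := Tuple.sort (OrderDual.toDual ∘ f)
    have hanti : Antitone (f ∘ τ) := fun a b hab => hsort hab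
    refine ⟨(f ∘ τ, τ.symm), ?_, ?_⟩
    · simp only [Finset.mem_product, Finset.mem_filter, Fintype.mem_piFinset, Finset.mem_range,
        Finset.mem_univ, and_true, Function.comp_apply]
      exact ⟨fun i => hf.1 _, hanti.strictAnti_of_injective (hf.2.comp τ.injective)⟩
    · funext i
      simp

open Classical in
/-- The Cauchy–Binet formula for a Gram determinant. -/
theorem det_sum_mul_eq_sum_sq (a : Fin l → ℕ → ℝ) (M : ℕ) :
    Matrix.det (Matrix.of fun j k : Fin l => ∑ m ∈ Finset.range M, a j m * a k m) =
      ∑ f ∈ Fintype.piFinset fun _ : Fin l => Finset.range M,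
        if StrictAnti f then Matrix.det (Matrix.of fun i j : Fin l => a j (f i)) ^ 2 else 0 := by
  have hdet : ∀ f : Fin l → ℕ, Matrix.det (Matrix.of fun i j : Fin l => a j (f i)) =
      ∑ σ : Equiv.Perm (Fin l), ((Equiv.Perm.sign σ : ℤ) : ℝ) * ∏ i, a (σ i) (f i) := fun f => by
    rw [← Matrix.det_transpose, Matrix.det_apply']
    rfl
  have hsum : Matrix.det (Matrix.of fun j k : Fin l => ∑ m ∈ Finset.range M, a j m * a k m) =
      ∑ f ∈ Fintype.piFinset fun _ : Fin l => Finset.range M,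
        (∏ i, a i (f i)) * Matrix.det (Matrix.of fun i j : Fin l => a j (f i)) := by
    simp only [hdet, Matrix.det_apply', Matrix.of_apply, Finset.prod_univ_sum, Finset.mul_sum]
    rw [Finset.sum_comm]
    refine Finset.sum_congr rfl fun f _ => Finset.sum_congr rfl fun σ _ => ?_
    rw [Finset.prod_mul_distrib]
    ring
  rw [hsum, sum_injective_eq_sum_strictAnti]
  · refine Finset.sum_congr rfl fun f _ => if_congr Iff.rfl ?_ rfl
    have hperm : ∀ τ : Equiv.Perm (Fin l),
        Matrix.det (Matrix.of fun i j : Fin l => a j ((f ∘ τ) i)) =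
          ((Equiv.Perm.sign τ : ℤ) : ℝ) * Matrix.det (Matrix.of fun i j : Fin l => a j (f i)) :=
      fun τ => Matrix.det_permute τ (Matrix.of fun i j : Fin l => a j (f i))
    simp only [hperm]
    rw [sq]
    nth_rewrite 3 [Matrix.det_apply']
    rw [Finset.mul_sum]
    refine Finset.sum_congr rfl fun τ _ => ?_
    simp only [Matrix.of_apply, Function.comp_apply]
    ring
  · intro f hf
    obtain ⟨i, j, hij, hne⟩ := Function.not_injective_iff.1 hf
    rw [Matrix.det_zero_of_row_eq hne (funext fun k => by simp [hij]), mul_zero]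

open Classical in
/-- The Cauchy–Binet formula for an infinite Gram determinant. -/
theorem hasSum_sq_det {a : Fin l → ℕ → ℝ} {B : Fin l → Fin l → ℝ}
    (h : ∀ j k, HasSum (fun m => a j m * a k m) (B j k)) :
    HasSum (fun f : Fin l → ℕ =>
      if StrictAnti f then Matrix.det (Matrix.of fun i j : Fin l => a j (f i)) ^ 2 else 0)
      (Matrix.det (Matrix.of B)) := by
  set g : (Fin l → ℕ) → ℝ := fun f =>
    if StrictAnti f then Matrix.det (Matrix.of fun i j : Fin l => a j (f i)) ^ 2 else 0 with hg
  have hg0 : ∀ f, 0 ≤ g f := fun f => by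
    simp only [hg]; split_ifs <;> positivity
  set P : ℕ → Finset (Fin l → ℕ) := fun M => Fintype.piFinset fun _ => Finset.range M with hP
  have hPmono : Monotone P := fun M N hMN =>
    Fintype.piFinset_subset _ _ fun _ => Finset.range_mono hMN
  have hPmem : ∀ f, ∃ M, f ∈ P M := fun f =>
    ⟨∑ i, f i + 1, Fintype.mem_piFinset.2 fun i => Finset.mem_range.2 (Nat.lt_succ_of_le
      (Finset.single_le_sum (f := f) (fun _ _ => Nat.zero_le _) (Finset.mem_univ i)))⟩
  have hPtop := Filter.tendsto_atTop_finset_of_monotone hPmono hPmem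
  have hlim : Filter.Tendsto (fun M => ∑ f ∈ P M, g f) Filter.atTop
      (nhds (Matrix.det (Matrix.of B))) := by
    simp only [hP, hg, ← det_sum_mul_eq_sum_sq]
    refine ((continuous_id.matrix_det).tendsto (Matrix.of B)).comp ?_
    exact tendsto_pi_nhds.2 fun j => tendsto_pi_nhds.2 fun k => (h j k).tendsto_sum_nat
  have hmono : Monotone fun M => ∑ f ∈ P M, g f := fun M N hMN =>
    Finset.sum_le_sum_of_subset_of_nonneg (hPmono hMN) fun f _ _ => hg0 f
  have hsummable : Summable g := by
    refine summable_of_sum_le (c := Matrix.det (Matrix.of B)) hg0 fun u => ?_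
    obtain ⟨M, hM⟩ := (hPtop.eventually_ge_atTop u).exists
    exact (Finset.sum_le_sum_of_subset_of_nonneg hM fun f _ _ => hg0 f).trans
      (hmono.ge_of_tendsto hlim M)
  have := tendsto_nhds_unique (hsummable.hasSum.comp hPtop) hlim
  exact this ▸ hsummable.hasSum

end CauchyBinet

theorem summable_besselI (d : ℕ) (t : ℝ) :
    Summable fun m : ℕ => t ^ (2 * m + d) / ((m.factorial : ℝ) * ((m + d).factorial : ℝ)) := by
  refine Summable.of_norm_bounded ((Real.summable_pow_div_factorial (t ^ 2)).mul_left (|t| ^ d))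
    fun m => ?_
  have h₁ : (1 : ℝ) ≤ ((m + d).factorial : ℝ) := by exact_mod_cast Nat.factorial_pos _
  have h₂ : (0 : ℝ) < (m.factorial : ℝ) := by exact_mod_cast Nat.factorial_pos _
  rw [norm_div, norm_pow, norm_mul, RCLike.norm_natCast, RCLike.norm_natCast, Real.norm_eq_abs,
    pow_add, pow_mul, sq_abs, mul_comm (|t| ^ d), div_mul_eq_mul_div]
  exact div_le_div_of_nonneg_left (by positivity) h₂ (le_mul_of_one_le_right h₂.le h₁)

theorem hasSum_divPow_mul_of_le (t : ℝ) {b b' : ℕ} (h : b ≤ b') {d : ℤ} (hd : d.natAbs = b' - b) :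
    HasSum (fun m : ℕ => divPow t ((m : ℤ) - b) * divPow t ((m : ℤ) - b')) (besselI d t) := by
  have hinj : Function.Injective fun s : ℕ => s + b' := add_left_injective b'
  rw [← hinj.hasSum_iff]
  · refine HasSum.congr_fun (summable_besselI d.natAbs t).hasSum fun s => ?_
    have h₁ : ((s + b' : ℕ) : ℤ) - b = (s + d.natAbs : ℕ) := by omega
    have h₂ : ((s + b' : ℕ) : ℤ) - b' = s := by omega
    rw [Function.comp_apply, h₁, h₂, divPow_natCast, divPow_natCast, div_mul_div_comm, ← pow_add]
    ring
  · intro m hm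
    have : m < b' := by
      by_contra hlt
      exact hm ⟨m - b', Nat.sub_add_cancel (not_lt.1 hlt)⟩
    rw [divPow_of_neg t (a := (m : ℤ) - b') (by omega), mul_zero]

theorem hasSum_divPow_mul (t : ℝ) (b b' : ℕ) {d : ℤ} (hd : d.natAbs = ((b' : ℤ) - b).natAbs) :
    HasSum (fun m : ℕ => divPow t ((m : ℤ) - b) * divPow t ((m : ℤ) - b')) (besselI d t) := by
  rcases le_total b b' with h | h
  · exact hasSum_divPow_mul_of_le t h (by omega)
  · simp only [mul_comm (divPow t (_ - (b : ℤ)))]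
    exact hasSum_divPow_mul_of_le t h (by omega)

theorem hasSum_divPowDet_sq (l : ℕ) (t : ℝ) :
    HasSum (fun c : Fin l → ℕ =>
      if Antitone c then divPowDet t (fun i => (c i : ℤ) - (i : ℕ)) ^ 2 else 0)
      (Matrix.det (Matrix.of fun j k : Fin l => besselI ((j : ℕ) - (k : ℕ) : ℤ) t)) := by
  classical
  have key := hasSum_sq_det
    (a := fun (j : Fin l) (m : ℕ) => divPow t ((m : ℤ) - (l - 1 - j : ℕ)))
    (B := fun j k => besselI ((j : ℕ) - (k : ℕ) : ℤ) t)
    fun j k => hasSum_divPow_mul t _ _ (by have := j.2; have := k.2; omega)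
  set δ : Fin l → ℕ := fun i => l - 1 - i with hδ
  have hinj : Function.Injective fun c : Fin l → ℕ => c + δ := add_left_injective δ
  rw [← hinj.hasSum_iff] at key
  · refine key.congr_fun fun c => ?_
    have hanti : StrictAnti (c + δ) ↔ Antitone c := by
      constructor
      · intro h i j hij
        have h₁ := h.add_sub_le_apply hij
        have h₂ := Fin.le_def.1 hij
        have h₃ := j.2
        simp only [hδ, Pi.add_apply] at h₁
        omega
      · intro h i j hij
        have h₁ := h hij.le
        have h₂ := Fin.lt_def.1 hij
        have h₃ := j.2
        simp only [hδ, Pi.add_apply]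
        omega
    refine if_congr hanti.symm (congrArg (· ^ 2) ?_) rfl
    refine congrArg Matrix.det (Matrix.ext fun i j => congrArg (divPow t) ?_)
    have hi := i.2
    have hj := j.2
    simp only [hδ, Pi.add_apply]
    omega
  · intro f hf
    refine if_neg fun hanti => hf ⟨f - δ, funext fun i => Nat.sub_add_cancel ?_⟩
    have hi := i.2
    have := hanti.add_sub_le_apply (i := i) (j := ⟨l - 1, by omega⟩)
      (Fin.le_def.2 (by dsimp only; omega))
    simp only [hδ] at this ⊢
    omega

/-- `Σ_{n≥0} f_{n,l} · t^{2n}/(n!)² = det_{0≤j,k<l} ( I_{j−k}(2t) )`. -/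
theorem permCount_gf_eq_bessel_toeplitz_det (l : ℕ) (t : ℝ) :
    ∑' n : ℕ, (permCount n l : ℝ) * t ^ (2 * n) /
        ((Nat.factorial n : ℝ) * (Nat.factorial n : ℝ)) =
      Matrix.det (Matrix.of fun j k : Fin l =>
        besselI ((j : ℕ) - (k : ℕ) : ℤ) t) := by
  have h := (Finset.Nat.sigmaAntidiagonalTupleEquivTuple l).hasSum_iff.2 (hasSum_divPowDet_sq l t)
  simp only [permCount_mul_div]
  refine (h.sigma fun n => ?_).tsum_eq
  exact Finset.hasSum (Finset.Nat.antidiagonalTuple l n) fun c =>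
    if Antitone c then divPowDet t (fun i => (c i : ℤ) - (i : ℕ)) ^ 2 else 0
end
end
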